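/- arXiv:0709.0564 — 2 statements merged into one kernel-verified Lean document; each statement's English description precedes it below -/
import Mathlib

section
/- Let Γ be a distance-regular graph with classical parameters (D, b, α, β), D ≥ 4, and intersection numbers a₁ = 0 and a₂ ≠ 0. Fix vertices x, y with ∂(x,y) = 3, set C = {z ∈ Γ₃(x) : B(x,z) = B(x,y)} and Δ = [x,C] = {v ∈ X : ∃ z ∈ C with ∂(x,v)+∂(v,z)=∂(x,z)}. Suppose z, u ∈ Δ and s t u z w is a pentagon in Γ with z, w ∈ Γ₂(x) and u ∈ Γ₃(x). Then w ∈ Δ. -/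
/-!
Common definitions: distance-regular graphs (via an intersection-number function `p`),
classical parameters, and the sets `B(x,y)`, `A(x,y)`, `C(x,y)`.
The distance `∂` is `SimpleGraph.dist`.
-/

variable {V : Type*}

/-- `Γ` is distance-regular with intersection numbers `p h i j = p^h_{ij}`
(for indices up to the diameter `D`). -/
def SimpleGraph.IsDistRegularWith (G : SimpleGraph V) (D : ℕ) (p : ℕ → ℕ → ℕ → ℕ) : Prop :=
  ∀ h i j : ℕ, h ≤ D → i ≤ D → j ≤ D → ∀ x y : V, G.dist x y = h →
    {z : V | G.dist x z = i ∧ G.dist y z = j}.ncard = p h i j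

/-- The Gaussian bracket `[i] = 1 + b + b² + ⋯ + b^{i-1}`. -/
def gaussBracket (b : ℝ) (i : ℕ) : ℝ := ∑ k ∈ Finset.range i, b ^ k

/-- A distance-regular graph with intersection numbers `p` has classical parameters
`(D, b, α, β)`: `b ∉ {0, -1}`, `c_i = [i](1 + α[i-1])` and `b_i = ([D]-[i])(β - α[i])`
for `0 ≤ i ≤ D`, where `c_i = p^i_{1,i-1}` and `b_i = p^i_{1,i+1}`. -/
def HasClassicalParams (D : ℕ) (p : ℕ → ℕ → ℕ → ℕ) (b α β : ℝ) : Prop :=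
  b ≠ 0 ∧ b ≠ -1 ∧
    (∀ i ≤ D, (p i 1 (i - 1) : ℝ) = gaussBracket b i * (1 + α * gaussBracket b (i - 1))) ∧
    (∀ i ≤ D, (p i 1 (i + 1) : ℝ) =
      (gaussBracket b D - gaussBracket b i) * (β - α * gaussBracket b i))

/-- `B(x,y) = Γ₁(x) ∩ Γ_{∂(x,y)+1}(y)`. -/
def Bset (G : SimpleGraph V) (x y : V) : Set V :=
  {v | G.dist x v = 1 ∧ G.dist y v = G.dist x y + 1}

/-- `A(x,y) = Γ₁(x) ∩ Γ_{∂(x,y)}(y)`. -/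
def Aset (G : SimpleGraph V) (x y : V) : Set V :=
  {v | G.dist x v = 1 ∧ G.dist y v = G.dist x y}

/-- `C(x,y) = Γ₁(x) ∩ Γ_{∂(x,y)-1}(y)`. -/
def Cset (G : SimpleGraph V) (x y : V) : Set V :=
  {v | G.dist x v = 1 ∧ G.dist y v = G.dist x y - 1}

/-- `C = {z ∈ Γ₃(x) : B(x,z) = B(x,y)}`. -/
def Cclass (G : SimpleGraph V) (x y : V) : Set V :=
  {z | G.dist x z = 3 ∧ Bset G x z = Bset G x y}

/-- `Δ = [x, C] = {v : ∃ z ∈ C, ∂(x,v) + ∂(v,z) = ∂(x,z)}`. -/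
def Delta (G : SimpleGraph V) (x y : V) : Set V :=
  {v | ∃ z ∈ Cclass G x y, G.dist x v + G.dist v z = G.dist x z}

set_option linter.unusedSectionVars false
set_option linter.unusedSimpArgs false

open Polynomial in
/-- spectral data -/
structure SpecData {V : Type*} [Fintype V] (d : V → V → ℕ) (D : ℕ) (q : ℝ) (c a e : ℕ → ℝ)
    (θ : ℕ → ℝ) : Prop where
  symm : ∀ x y, d x y = d y x
  zero : ∀ x y, d x y = 0 ↔ x = y
  le : ∀ x y, d x y ≤ D
  ex : ∃ x y, d x y = D
  cpos : ∀ h, 1 ≤ h → h ≤ D → 0 < c h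
  c0 : c 0 = 0
  mul : ∀ (f : ℕ → ℝ) (x y : V), ∑ z, (if d x z = 1 then (1:ℝ) else 0) * f (d z y) =
    c (d x y) * f (d x y - 1) + a (d x y) * f (d x y) + e (d x y) * f (d x y + 1)
  inj : ∀ h h', h ≤ D → h' ≤ D → q ^ h = q ^ h' → h = h'
  recur : ∀ j, ∃ r : ℕ → ℝ, ∀ h ≤ D, c h * (q ^ (h - 1)) ^ j + a h * (q ^ h) ^ j
    + e h * (q ^ (h + 1)) ^ j = θ j * (q ^ h) ^ j + ∑ i ∈ Finset.range j, r i * (q ^ h) ^ i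

namespace SpecData
open Polynomial Matrix Finset

variable {V : Type*} [Fintype V] {d : V → V → ℕ} {D : ℕ} {q : ℝ} {c a e θ : ℕ → ℝ}

/-- distance matrix -/
def MM (d : V → V → ℕ) (f : ℕ → ℝ) : Matrix V V ℝ := Matrix.of fun x y => f (d x y)

/-- adjacency -/
def AA (d : V → V → ℕ) : Matrix V V ℝ := MM d (fun h => if h = 1 then 1 else 0)

/-- filtration -/
def WW (d : V → V → ℕ) (q : ℝ) (n : ℕ) : Submodule ℝ (Matrix V V ℝ) :=
  Submodule.span ℝ ((fun i => MM d (fun h => (q ^ h) ^ i)) '' Set.Iio n)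

lemma MM_add (f g : ℕ → ℝ) : MM d f + MM d g = MM d (fun h => f h + g h) := by
  ext x y; simp [MM]

lemma MM_smul (r : ℝ) (f : ℕ → ℝ) : r • MM d f = MM d (fun h => r * f h) := by
  ext x y; simp [MM]

lemma AA_mul (H : SpecData d D q c a e θ) (f : ℕ → ℝ) :
    AA d * MM d f = MM d (fun h => c h * f (h - 1) + a h * f h + e h * f (h + 1)) := by
  ext x y
  simp only [AA, MM, Matrix.mul_apply, Matrix.of_apply]
  exact H.mul f x y

lemma gen_mem {i n : ℕ} (h : i < n) : MM d (fun h => (q ^ h) ^ i) ∈ WW d q n :=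
  Submodule.subset_span ⟨i, h, rfl⟩

lemma WW_mono {n m : ℕ} (h : n ≤ m) : WW d q n ≤ WW d q m :=
  Submodule.span_mono (Set.image_mono (Set.Iio_subset_Iio h))

lemma sum_mem_WW (r : ℕ → ℝ) (n : ℕ) :
    MM d (fun h => ∑ i ∈ range n, r i * (q ^ h) ^ i) ∈ WW d q n := by
  have : MM d (fun h => ∑ i ∈ range n, r i * (q ^ h) ^ i)
      = ∑ i ∈ range n, r i • MM d (fun h => (q ^ h) ^ i) := by
    ext x y
    rw [Matrix.sum_apply]
    simp [MM]
  rw [this]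
  exact Submodule.sum_mem _ fun i hi => Submodule.smul_mem _ _ (gen_mem (by simpa using hi))

lemma MM_congr (H : SpecData d D q c a e θ) {f g : ℕ → ℝ} (h : ∀ i ≤ D, f i = g i) :
    MM d f = MM d g := by
  ext x y; exact h _ (H.le x y)

lemma AA_mul_gen (H : SpecData d D q c a e θ) (j : ℕ) :
    ∃ N ∈ WW d q j, AA d * MM d (fun h => (q ^ h) ^ j) =
      θ j • MM d (fun h => (q ^ h) ^ j) + N := by
  obtain ⟨r, hr⟩ := H.recur j
  refine ⟨_, sum_mem_WW r j, ?_⟩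
  rw [H.AA_mul, MM_smul, MM_add]
  exact H.MM_congr hr

lemma AA_WW (H : SpecData d D q c a e θ) {n : ℕ} {N : Matrix V V ℝ} (hN : N ∈ WW d q n) :
    AA d * N ∈ WW d q n := by
  induction hN using Submodule.span_induction with
  | mem x hx =>
    obtain ⟨i, hi, rfl⟩ := hx
    obtain ⟨N, hN, h⟩ := H.AA_mul_gen i
    simp only [h]
    exact Submodule.add_mem _ (Submodule.smul_mem _ _ (gen_mem hi)) (WW_mono (le_of_lt hi) hN)
  | zero => simp
  | add x y _ _ hx hy => rw [mul_add]; exact Submodule.add_mem _ hx hy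
  | smul r x _ hx => rw [mul_smul_comm]; exact Submodule.smul_mem _ _ hx

lemma AA_sub_WW (H : SpecData d D q c a e θ) {n : ℕ} {N : Matrix V V ℝ}
    (hN : N ∈ WW d q (n + 1)) : AA d * N - θ n • N ∈ WW d q n := by
  induction hN using Submodule.span_induction with
  | mem x hx =>
    obtain ⟨i, hi, rfl⟩ := hx
    obtain ⟨N, hN, h⟩ := H.AA_mul_gen i
    simp only [h]
    have hi' : i ≤ n := Nat.lt_succ_iff.mp hi
    rcases hi'.lt_or_eq with h1 | h1
    · exact Submodule.sub_mem _ (Submodule.add_mem _ (Submodule.smul_mem _ _ (gen_mem h1))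
        (WW_mono h1.le hN)) (Submodule.smul_mem _ _ (gen_mem h1))
    · subst h1
      simpa using hN
  | zero => simp
  | add x y _ _ hx hy =>
    rw [mul_add, smul_add, add_sub_add_comm]; exact Submodule.add_mem _ hx hy
  | smul r x _ hx =>
    rw [mul_smul_comm, smul_comm (θ n) r, ← smul_sub]; exact Submodule.smul_mem _ _ hx

variable [DecidableEq V]

lemma aeval_WW (H : SpecData d D q c a e θ) {n : ℕ} {N : Matrix V V ℝ} (hN : N ∈ WW d q n)
    (P : ℝ[X]) : aeval (AA d) P * N ∈ WW d q n := by
  induction P using Polynomial.induction_on' with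
  | add P Q hP hQ => rw [map_add, add_mul]; exact Submodule.add_mem _ hP hQ
  | monomial m r =>
    rw [aeval_monomial, ← Algebra.smul_def, smul_mul_assoc]
    refine Submodule.smul_mem _ _ ?_
    induction m with
    | zero => simpa using hN
    | succ m ih => rw [pow_succ', mul_assoc]; exact H.AA_WW ih

lemma nodal_WW (H : SpecData d D q c a e θ) {n m : ℕ} (hnm : n ≤ m) :
    ∀ N ∈ WW d q m, aeval (AA d) (Lagrange.nodal (Ico n m) θ) * N ∈ WW d q n := by
  induction m, hnm using Nat.le_induction with
  | base => intro N hN; simpa using hN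
  | succ m hm ih =>
    intro N hN
    have : Lagrange.nodal (Ico n (m+1)) θ = Lagrange.nodal (Ico n m) θ * (X - C (θ m)) := by
      rw [Lagrange.nodal, Finset.prod_Ico_succ_top hm, Lagrange.nodal]
    rw [this, map_mul, mul_assoc]
    apply ih
    have h2 := H.AA_sub_WW hN
    have : aeval (AA d) (X - C (θ m)) * N = AA d * N - θ m • N := by
      rw [map_sub, aeval_X, aeval_C, sub_mul, ← Algebra.smul_def]
    rw [this]; exact h2

lemma nodal_WW' (H : SpecData d D q c a e θ) {n m : ℕ} (hnm : n ≤ m) (s : Finset ℕ)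
    (hs : Ico n m ⊆ s) (N : Matrix V V ℝ) (hN : N ∈ WW d q m) :
    aeval (AA d) (Lagrange.nodal s θ) * N ∈ WW d q n := by
  have : Lagrange.nodal s θ = Lagrange.nodal (s \ Ico n m) θ * Lagrange.nodal (Ico n m) θ := by
    simp only [Lagrange.nodal]
    rw [Finset.prod_sdiff hs]
  rw [this, map_mul, mul_assoc]
  exact H.aeval_WW (H.nodal_WW hnm N hN) _

lemma nodal_kill (H : SpecData d D q c a e θ) {m : ℕ} (s : Finset ℕ)
    (hs : range m ⊆ s) (N : Matrix V V ℝ) (hN : N ∈ WW d q m) :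
    aeval (AA d) (Lagrange.nodal s θ) * N = 0 := by
  have := H.nodal_WW' (Nat.zero_le m) s (by rwa [← Finset.range_eq_Ico]) N hN
  have h0 : WW d q 0 = ⊥ := by
    have : Set.Iio (0:ℕ) = ∅ := by ext; simp
    rw [WW, this]; simp
  rw [h0] at this
  simpa using this

lemma MM_mem (H : SpecData d D q c a e θ) (f : ℕ → ℝ) : MM d f ∈ WW d q (D + 1) := by
  have hinj : Set.InjOn (fun h : ℕ => q ^ h) (range (D+1) : Finset ℕ) := by
    intro h hh h' hh' heq
    simp at hh hh'
    exact H.inj h h' (by omega) (by omega) heq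
  set P := Lagrange.interpolate (range (D+1)) (fun h : ℕ => q ^ h) f with hP
  have hdeg : P.degree < ((D+1 : ℕ) : WithBot ℕ) := by
    have h := Lagrange.degree_interpolate_lt (s := range (D+1)) f hinj
    rwa [card_range] at h
  have : MM d f = MM d (fun h => ∑ i ∈ range (D+1), P.coeff i * (q ^ h) ^ i) := by
    apply H.MM_congr
    intro i hi
    have h1 := Lagrange.eval_interpolate_at_node (s := range (D+1)) (i := i) f hinj
      (by simp; omega)
    rw [← h1, ← hP]
    rcases eq_or_ne P 0 with h0 | h0
    · simp [h0]
    · exact Polynomial.eval_eq_sum_range' ((Polynomial.natDegree_lt_iff_degree_lt h0).2 hdeg) _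
  rw [this]
  exact sum_mem_WW _ _

lemma one_eq (H : SpecData d D q c a e θ) :
    (1 : Matrix V V ℝ) = MM d (fun h => if h = 0 then 1 else 0) := by
  ext x y
  simp [MM, Matrix.one_apply, H.zero]

lemma WW_eq {n : ℕ} {N : Matrix V V ℝ} (hN : N ∈ WW d q n) : ∃ f, N = MM d f := by
  induction hN using Submodule.span_induction with
  | mem x hx =>
    obtain ⟨i, hi, rfl⟩ := hx
    exact ⟨_, rfl⟩
  | zero => exact ⟨fun _ => 0, by ext; simp [MM]⟩
  | add x y _ _ hx hy =>
    obtain ⟨f, rfl⟩ := hx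
    obtain ⟨g, rfl⟩ := hy
    exact ⟨_, MM_add f g⟩
  | smul r x _ hx =>
    obtain ⟨f, rfl⟩ := hx
    exact ⟨_, MM_smul r f⟩

lemma aeval_mem (H : SpecData d D q c a e θ) (P : ℝ[X]) : aeval (AA d) P ∈ WW d q (D+1) := by
  have := H.aeval_WW (H.one_eq ▸ H.MM_mem _ : (1 : Matrix V V ℝ) ∈ WW d q (D+1)) P
  simpa using this

lemma aeval_symm (H : SpecData d D q c a e θ) (P : ℝ[X]) :
    (aeval (AA d) P)ᵀ = aeval (AA d) P := by
  obtain ⟨f, hf⟩ := WW_eq (H.aeval_mem P)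
  rw [hf]
  ext x y
  simp [MM, H.symm x y]

lemma pow_entry (H : SpecData d D q c a e θ) (n : ℕ) : ∃ f : ℕ → ℝ, (AA d) ^ n = MM d f ∧
    (∀ h, n < h → h ≤ D → f h = 0) ∧ (n ≤ D → 0 < f n) := by
  induction n with
  | zero =>
    refine ⟨fun h => if h = 0 then 1 else 0, by rw [pow_zero]; exact H.one_eq, ?_, ?_⟩
    · intro h hh _; simp; omega
    · simp
  | succ n ih =>
    obtain ⟨f, hf, h1, h2⟩ := ih
    set f' : ℕ → ℝ := fun h => if h ≤ D then f h else 0 with hf'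
    have hff : MM d f = MM d f' := H.MM_congr (by intro i hi; simp [hf', hi])
    refine ⟨fun h => c h * f' (h - 1) + a h * f' h + e h * f' (h + 1),
      by rw [pow_succ', hf, hff, H.AA_mul], ?_, ?_⟩
    · intro h hh hD
      have e1 : f' (h-1) = 0 := by
        simp only [hf']; split_ifs
        · exact h1 _ (by omega) (by omega)
        · rfl
      have e2 : f' h = 0 := by
        simp only [hf']; split_ifs
        · exact h1 _ (by omega) (by omega)
      have e3 : f' (h+1) = 0 := by
        simp only [hf']; split_ifs
        · exact h1 _ (by omega) (by omega)
        · rfl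
      simp [e1, e2, e3]
    · intro hD
      have e2 : f' (n+1) = 0 := by
        simp only [hf']; split_ifs
        · exact h1 _ (by omega) (by omega)
      have e3 : f' (n+1+1) = 0 := by
        simp only [hf']; split_ifs
        · exact h1 _ (by omega) (by omega)
        · rfl
      have e1 : f' n = f n := by simp only [hf']; rw [if_pos (by omega)]
      simp only [e2, e3, Nat.add_sub_cancel, e1]
      have := mul_pos (H.cpos (n+1) (by omega) hD) (h2 (by omega))
      linarith

lemma monic_ne (H : SpecData d D q c a e θ) (P : ℝ[X]) (hP : P.Monic) (hd : P.natDegree = D) :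
    aeval (AA d) P ≠ 0 := by
  intro h0
  obtain ⟨x, y, hxy⟩ := H.ex
  rw [aeval_eq_sum_range, Finset.sum_range_succ, hd] at h0
  have h1 := congrFun (congrFun h0 x) y
  rw [Matrix.add_apply, Matrix.sum_apply] at h1
  rw [Finset.sum_eq_zero] at h1
  · obtain ⟨f, hf, _, h2⟩ := H.pow_entry D
    have : P.coeff D = 1 := by rw [← hd]; exact hP
    rw [this, hf] at h1
    simp [MM, hxy] at h1
    exact absurd h1 (h2 le_rfl).ne'
  · intro i hi
    obtain ⟨f, hf, h2, _⟩ := H.pow_entry i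
    rw [hf]
    simp only [Finset.mem_range] at hi
    simp [MM, hxy, h2 D hi le_rfl]

lemma nodal_zero (H : SpecData d D q c a e θ) :
    aeval (AA d) (Lagrange.nodal (range (D+1)) θ) = 0 := by
  have := H.nodal_kill (range (D+1)) subset_rfl 1 (H.one_eq ▸ H.MM_mem _)
  simpa using this

lemma theta_inj (H : SpecData d D q c a e θ) : Set.InjOn θ (range (D+1) : Finset ℕ) := by
  intro i hi j hj hij
  by_contra hne
  have hi' : i ∈ range (D+1) := by simpa using hi
  have hj' : j ∈ (range (D+1)).erase i := by
    rw [mem_erase]; exact ⟨fun h => hne h.symm, by simpa using hj⟩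
  set R := Lagrange.nodal (((range (D+1)).erase i).erase j) θ with hR
  set Q := Lagrange.nodal ((range (D+1)).erase i) θ with hQ
  have hQR : Q = (X - C (θ j)) * R := Lagrange.nodal_eq_mul_nodal_erase hj'
  have hn : Lagrange.nodal (range (D+1)) θ = (X - C (θ i)) * Q :=
    Lagrange.nodal_eq_mul_nodal_erase hi'
  apply H.monic_ne Q (Lagrange.nodal_monic)
  · rw [hQ, Lagrange.natDegree_nodal, card_erase_of_mem hi']; simp
  have h0 := H.nodal_zero
  rw [← Matrix.conjTranspose_mul_self_eq_zero, Matrix.conjTranspose_eq_transpose_of_trivial,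
    H.aeval_symm, ← map_mul]
  have : Q * Q = Lagrange.nodal (range (D+1)) θ * R := by
    rw [hn, hij]; nth_rewrite 2 [hQR]; ring
  rw [this, map_mul, h0, zero_mul]

/-- Lagrange idempotents -/
noncomputable def EE (d : V → V → ℕ) (D : ℕ) (θ : ℕ → ℝ) (i : ℕ) : Matrix V V ℝ :=
  aeval (AA d) (Lagrange.basis (range (D+1)) θ i)

lemma basis_eq (i : ℕ) : ∃ r : ℝ, Lagrange.basis (range (D+1)) θ i =
    C r * Lagrange.nodal ((range (D+1)).erase i) θ := by
  refine ⟨∏ j ∈ (range (D+1)).erase i, (θ i - θ j)⁻¹, ?_⟩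
  rw [map_prod, Lagrange.nodal, ← Finset.prod_mul_distrib]
  rfl

lemma EE_sum (H : SpecData d D q c a e θ) : ∑ i ∈ range (D+1), EE d D θ i = 1 := by
  simp only [EE]
  rw [← map_sum, Lagrange.sum_basis H.theta_inj (by simp), map_one]

lemma EE_kill {i n : ℕ} (H : SpecData d D q c a e θ) (hi : i ≤ D) (hn : n ≤ i)
    {N : Matrix V V ℝ} (hN : N ∈ WW d q n) : EE d D θ i * N = 0 := by
  obtain ⟨r, hr⟩ := basis_eq (D := D) (θ := θ) i
  rw [EE, hr, map_mul, mul_assoc, H.nodal_kill _ _ N hN, mul_zero]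
  intro j hj
  simp at hj ⊢; omega

lemma EE_mem {i : ℕ} (H : SpecData d D q c a e θ) (hi : i ≤ D) :
    EE d D θ i ∈ WW d q (i+1) := by
  obtain ⟨r, hr⟩ := basis_eq (D := D) (θ := θ) i
  rw [EE, hr, map_mul, aeval_C, ← Algebra.smul_def]
  refine Submodule.smul_mem _ _ ?_
  have := H.nodal_WW' (n := i+1) (m := D+1) (by omega) ((range (D+1)).erase i) (by
    intro j hj; simp at hj ⊢; omega) 1 (H.one_eq ▸ H.MM_mem _)
  simpa using this

lemma EE_eig {i : ℕ} (H : SpecData d D q c a e θ) (hi : i ≤ D) (P : ℝ[X]) :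
    aeval (AA d) P * EE d D θ i = (P.eval (θ i)) • EE d D θ i := by
  obtain ⟨r, hr⟩ := basis_eq (D := D) (θ := θ) i
  have h1 : (X - C (θ i)) * Lagrange.nodal ((range (D+1)).erase i) θ =
      Lagrange.nodal (range (D+1)) θ := (Lagrange.nodal_eq_mul_nodal_erase (by simp; omega)).symm
  obtain ⟨Q, hQ⟩ := Polynomial.X_sub_C_dvd_sub_C_eval (a := θ i) (p := P)
  have h2 : P = C (P.eval (θ i)) + (X - C (θ i)) * Q := by rw [← hQ]; ring
  have h3 : P * Lagrange.basis (range (D+1)) θ i =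
      C (P.eval (θ i)) * Lagrange.basis (range (D+1)) θ i
        + C r * Q * Lagrange.nodal (range (D+1)) θ := by
    rw [← h1]
    nth_rewrite 1 [h2]
    rw [hr]; ring
  rw [EE, ← map_mul, h3, map_add, map_mul, map_mul, H.nodal_zero, mul_zero, add_zero, aeval_C,
    ← Algebra.smul_def]

lemma aeval_expand (H : SpecData d D q c a e θ) (P : ℝ[X]) :
    aeval (AA d) P = ∑ i ∈ range (D+1), (P.eval (θ i)) • EE d D θ i := by
  rw [← mul_one (aeval (AA d) P), ← H.EE_sum, Finset.mul_sum]
  refine Finset.sum_congr rfl fun i hi => H.EE_eig ?_ P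
  simp at hi; omega

lemma dist_poly (H : SpecData d D q c a e θ) (n : ℕ) (hn : n ≤ D) :
    ∃ P : ℝ[X], aeval (AA d) P = MM d (fun h => if h = n then 1 else 0) := by
  induction n using Nat.strong_induction_on with
  | _ n ih =>
    rcases n with _ | n
    · exact ⟨1, by rw [map_one]; exact H.one_eq⟩
    obtain ⟨P, hP⟩ := ih n (by omega) (by omega)
    obtain ⟨P', hP'⟩ : ∃ P' : ℝ[X], aeval (AA d) P' =
        MM d (fun h => if h + 1 = n then 1 else 0) := by
      rcases n with _ | n
      · refine ⟨0, ?_⟩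
        rw [map_zero]; ext x y; simp [MM]
      · obtain ⟨P', hP'⟩ := ih n (by omega) (by omega)
        exact ⟨P', by simpa using hP'⟩
    have hc := H.cpos (n+1) (by omega) hn
    refine ⟨C (c (n+1))⁻¹ * (X * P - C (a n) * P - C (e (n-1)) * P'), ?_⟩
    simp only [map_mul, map_sub, aeval_C, aeval_X, ← Algebra.smul_def, hP, hP', H.AA_mul]
    ext x y
    simp only [MM, Matrix.smul_apply, Matrix.sub_apply, Matrix.of_apply, smul_eq_mul]
    rcases Nat.eq_zero_or_pos (d x y) with h0 | h0
    · rw [h0]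
      simp only [H.c0]
      rcases n with _ | n
      · simp
      · rcases n with _ | n <;> simp
    · obtain ⟨h, hh⟩ : ∃ h, d x y = h + 1 := ⟨d x y - 1, by omega⟩
      rw [hh]
      simp only [Nat.add_sub_cancel]
      by_cases h1 : h = n
      · subst h1
        have g : ¬ (h + 1 + 1 = h) := by omega
        simp [hc.ne', g]
      · by_cases h2 : h + 1 = n
        · subst h2
          simp
        · by_cases h3 : h + 1 + 1 = n
          · subst h3
            have g : ¬ (h = h + 1 + 1) := by omega
            simp [g]
          · simp [h1, h2, h3]

lemma MM_poly (H : SpecData d D q c a e θ) (f : ℕ → ℝ) :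
    ∃ P : ℝ[X], aeval (AA d) P = MM d f := by
  choose! P hP using H.dist_poly
  refine ⟨∑ n ∈ range (D+1), C (f n) * P n, ?_⟩
  rw [map_sum]
  have : ∀ n ∈ range (D+1), aeval (AA d) (C (f n) * P n) =
      MM d (fun h => if h = n then f n else 0) := by
    intro n hn
    rw [map_mul, hP n (by simp at hn; omega), aeval_C, ← Algebra.smul_def]
    ext x y; simp [MM]
  rw [Finset.sum_congr rfl this]
  ext x y
  rw [Matrix.sum_apply]
  simp only [MM, Matrix.of_apply]
  rw [Finset.sum_ite_eq, if_pos]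
  have := H.le x y
  simp; omega

lemma hadamard_WW {n : ℕ} {N K : Matrix V V ℝ} (hN : N ∈ WW d q n) (hK : K ∈ WW d q 2) :
    N ⊙ K ∈ WW d q (n+1) := by
  induction hN using Submodule.span_induction with
  | mem x hx =>
    obtain ⟨i, hi, rfl⟩ := hx
    induction hK using Submodule.span_induction with
    | mem x hx =>
      obtain ⟨j, hj, rfl⟩ := hx
      have : MM d (fun h => (q^h)^i) ⊙ MM d (fun h => (q^h)^j) = MM d (fun h => (q^h)^(i+j)) := by
        ext x y; simp [MM, pow_add]
      simp only [this]
      simp at hi hj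
      exact gen_mem (by omega)
    | zero => simp
    | add x y _ _ hx hy =>
      rw [Matrix.hadamard_add]; exact Submodule.add_mem _ hx hy
    | smul r x _ hx =>
      rw [Matrix.hadamard_smul]; exact Submodule.smul_mem _ _ hx
  | zero => simp
  | add x y _ _ hx hy =>
    rw [Matrix.add_hadamard]; exact Submodule.add_mem _ hx hy
  | smul r x _ hx =>
    rw [Matrix.smul_hadamard]; exact Submodule.smul_mem _ _ hx

/-- dual adjacency -/
def DD (d : V → V → ℕ) (q : ℝ) (w : V) : Matrix V V ℝ := Matrix.diagonal fun z => q ^ d w z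

lemma EDE_gt (H : SpecData d D q c a e θ) {i j : ℕ} (hi : i ≤ D) (hij : j + 1 < i) (w : V) :
    EE d D θ i * DD d q w * EE d D θ j = 0 := by
  set F := EE d D θ i * EE d D θ i with hF
  set G := EE d D θ j * EE d D θ j with hG
  have hG' : G ∈ WW d q (j+1) := H.aeval_WW (H.EE_mem (by omega)) _
  set K := MM d (fun h => q ^ h) with hK
  have hKm : K ∈ WW d q 2 := by
    have := gen_mem (d := d) (q := q) (i := 1) (n := 2) (by omega)
    simpa using this
  have hKK : K * K ∈ WW d q 2 := by
    obtain ⟨P, hP⟩ := H.MM_poly (fun h => q ^ h)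
    have := H.aeval_WW hKm P
    rwa [hP] at this
  have key : F * (G ⊙ (K * K)) = 0 := by
    rw [hF, mul_assoc, H.EE_kill hi (n := j + 1 + 1) (by omega) (hadamard_WW hG' hKK), mul_zero]
  have hEs : ∀ i, (EE d D θ i)ᵀ = EE d D θ i := fun i => H.aeval_symm _
  have hGs : Gᵀ = G := by rw [hG, Matrix.transpose_mul, hEs]
  have tr : ∀ w, ((EE d D θ i * DD d q w * EE d D θ j) *
      (EE d D θ i * DD d q w * EE d D θ j)ᴴ).trace
      = ∑ x, ∑ y, F x y * G y x * (K y w * K w x) := by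
    intro w
    rw [Matrix.conjTranspose_eq_transpose_of_trivial, Matrix.transpose_mul, Matrix.transpose_mul,
      hEs, hEs]
    have : (DD d q w)ᵀ = DD d q w := by simp [DD]
    rw [this]
    have : (EE d D θ i * DD d q w * EE d D θ j *
        (EE d D θ j * (DD d q w * EE d D θ i))).trace = (F * DD d q w * (G * DD d q w)).trace := by
      rw [hF, hG]
      have : EE d D θ i * DD d q w * EE d D θ j * (EE d D θ j * (DD d q w * EE d D θ i))
        = (EE d D θ i * DD d q w * EE d D θ j * EE d D θ j * DD d q w) * EE d D θ i := by
        simp only [mul_assoc]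
      rw [this, Matrix.trace_mul_comm]
      simp only [mul_assoc]
    rw [this, Matrix.trace]
    refine Finset.sum_congr rfl fun x _ => ?_
    rw [Matrix.diag_apply, Matrix.mul_apply]
    refine Finset.sum_congr rfl fun y _ => ?_
    simp only [DD, Matrix.mul_diagonal, hK, MM, Matrix.of_apply]
    rw [H.symm y w]; ring
  have nn : ∀ w, 0 ≤ ((EE d D θ i * DD d q w * EE d D θ j) *
      (EE d D θ i * DD d q w * EE d D θ j)ᴴ).trace := by
    intro w
    rw [Matrix.trace]
    refine Finset.sum_nonneg fun x _ => ?_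
    rw [Matrix.diag_apply, Matrix.mul_apply]
    refine Finset.sum_nonneg fun y _ => ?_
    simp [Matrix.conjTranspose_apply, mul_self_nonneg]
  have tot : ∑ w, ((EE d D θ i * DD d q w * EE d D θ j) *
      (EE d D θ i * DD d q w * EE d D θ j)ᴴ).trace = 0 := by
    rw [Finset.sum_congr rfl fun w _ => tr w, Finset.sum_comm]
    have h := congrArg Matrix.trace key
    rw [Matrix.trace_zero, Matrix.trace] at h
    rw [← h]
    refine Finset.sum_congr rfl fun x _ => ?_
    rw [Finset.sum_comm, Matrix.diag_apply, Matrix.mul_apply]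
    refine Finset.sum_congr rfl fun y _ => ?_
    rw [← Finset.mul_sum, Matrix.hadamard_apply, Matrix.mul_apply]; ring
  rw [Finset.sum_eq_zero_iff_of_nonneg fun w _ => nn w] at tot
  exact Matrix.trace_mul_conjTranspose_self_eq_zero_iff.1 (tot w (mem_univ w))

lemma EDE_lt (H : SpecData d D q c a e θ) {i j : ℕ} (hj : j ≤ D) (hij : i + 1 < j) (w : V) :
    EE d D θ i * DD d q w * EE d D θ j = 0 := by
  have h := congrArg Matrix.transpose (H.EDE_gt hj hij w)
  have hEs : ∀ i, (EE d D θ i)ᵀ = EE d D θ i := fun i => H.aeval_symm _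
  have h2 : (DD d q w)ᵀ = DD d q w := by simp [DD]
  rw [Matrix.transpose_mul, Matrix.transpose_mul, hEs, hEs, h2, Matrix.transpose_zero] at h
  rw [mul_assoc]; exact h

lemma balanced_poly (H : SpecData d D q c a e θ) (P Q : ℝ[X]) : ∃ L : ℕ → ℝ, ∀ w,
    aeval (AA d) P * DD d q w * aeval (AA d) Q - aeval (AA d) Q * DD d q w * aeval (AA d) P
      = MM d L * DD d q w - DD d q w * MM d L := by
  set s : ℕ → ℝ := fun i => P.eval (θ i)
  set t : ℕ → ℝ := fun i => Q.eval (θ i)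
  set l : ℕ → ℝ := fun i => - ∑ k ∈ range i, (s k * t (k+1) - t k * s (k+1)) with hl
  have hl1 : ∀ i, l i - l (i+1) = s i * t (i+1) - t i * s (i+1) := by
    intro i; simp only [hl, Finset.sum_range_succ]; ring
  set LM : Matrix V V ℝ := ∑ i ∈ range (D+1), l i • EE d D θ i with hLM
  have hmem : LM ∈ WW d q (D+1) :=
    Submodule.sum_mem _ fun i hi => Submodule.smul_mem _ _ (H.aeval_mem _)
  obtain ⟨L, hL⟩ := WW_eq hmem
  refine ⟨L, fun w => ?_⟩
  rw [← hL]
  have ex : ∀ (u v : ℕ → ℝ), (∑ i ∈ range (D+1), u i • EE d D θ i) * DD d q w *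
      (∑ j ∈ range (D+1), v j • EE d D θ j) = ∑ i ∈ range (D+1), ∑ j ∈ range (D+1),
        (u i * v j) • (EE d D θ i * DD d q w * EE d D θ j) := by
    intro u v
    rw [Finset.sum_mul, Finset.sum_mul]
    refine Finset.sum_congr rfl fun i _ => ?_
    rw [Finset.mul_sum]
    refine Finset.sum_congr rfl fun j _ => ?_
    rw [smul_mul_assoc, smul_mul_assoc, mul_smul_comm, smul_smul]
  have h1 : LM * DD d q w = LM * DD d q w * (∑ j ∈ range (D+1), (1:ℝ) • EE d D θ j) := by
    simp only [one_smul]; rw [H.EE_sum, mul_one]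
  have h2 : DD d q w * LM = (∑ j ∈ range (D+1), (1:ℝ) • EE d D θ j) * DD d q w * LM := by
    simp only [one_smul]; rw [H.EE_sum, one_mul]
  rw [h1, h2, H.aeval_expand P, H.aeval_expand Q, hLM]
  rw [ex, ex, ex, ex, ← Finset.sum_sub_distrib, ← Finset.sum_sub_distrib]
  refine Finset.sum_congr rfl fun i hi => ?_
  rw [← Finset.sum_sub_distrib, ← Finset.sum_sub_distrib]
  refine Finset.sum_congr rfl fun j hj => ?_
  simp only [Finset.mem_range] at hi hj
  rw [← sub_smul, ← sub_smul]
  by_cases g1 : j + 1 < i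
  · rw [H.EDE_gt (by omega) g1]; simp
  by_cases g2 : i + 1 < j
  · rw [H.EDE_lt (by omega) g2]; simp
  congr 1
  have : i = j ∨ j = i + 1 ∨ i = j + 1 := by omega
  rcases this with rfl | rfl | rfl
  · ring
  · linarith [hl1 i]
  · linarith [hl1 j]

theorem balanced (H : SpecData d D q c a e θ) (j : ℕ) : ∃ L : ℕ → ℝ, ∀ x y w,
    ∑ z ∈ univ.filter (fun z => d x z = 1 ∧ d y z = j), q ^ d z w
     - ∑ z ∈ univ.filter (fun z => d x z = j ∧ d y z = 1), q ^ d z w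
     = L (d x y) * (q ^ d x w - q ^ d y w) := by
  obtain ⟨P, hP⟩ := H.MM_poly (fun h => if h = 1 then 1 else 0)
  obtain ⟨Q, hQ⟩ := H.MM_poly (fun h => if h = j then 1 else 0)
  obtain ⟨L, hL⟩ := H.balanced_poly P Q
  refine ⟨fun h => - L h, fun x y w => ?_⟩
  have h := congrFun (congrFun (hL w) x) y
  rw [hP, hQ] at h
  simp only [Matrix.sub_apply, Matrix.mul_apply (M := _ * _), DD, Matrix.mul_diagonal,
    Matrix.diagonal_mul, MM, Matrix.of_apply] at h
  rw [H.symm w x, H.symm w y] at h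
  rw [Finset.sum_filter, Finset.sum_filter]
  have e1 : ∀ z, (if d x z = 1 ∧ d y z = j then q ^ d z w else 0) =
      (if d x z = 1 then (1:ℝ) else 0) * q ^ d w z * (if d z y = j then 1 else 0) := by
    intro z; rw [H.symm z w, H.symm z y]; split_ifs <;> simp_all
  have e2 : ∀ z, (if d x z = j ∧ d y z = 1 then q ^ d z w else 0) =
      (if d x z = j then (1:ℝ) else 0) * q ^ d w z * (if d z y = 1 then 1 else 0) := by
    intro z; rw [H.symm z w, H.symm z y]; split_ifs <;> simp_all
  simp only [e1, e2]
  rw [h]; ring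

end SpecData

/-- combinatorial data -/
structure GData {V : Type*} [Fintype V] (d : V → V → ℕ) (b : ℝ) (a2 c2 a3 : ℕ) : Prop where
  symm : ∀ x y, d x y = d y x
  zero : ∀ x y, d x y = 0 ↔ x = y
  tri : ∀ x y z, d x z ≤ d x y + d y z
  notri : ∀ x y z, d x y = 1 → d y z = 1 → d x z = 1 → False
  hc : ∀ x y, d x y = 2 → (Finset.univ.filter (fun z => d x z = 1 ∧ d y z = 1)).card = c2
  ha : ∀ x y, d x y = 2 → (Finset.univ.filter (fun z => d x z = 1 ∧ d y z = 2)).card = a2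
  ha3 : ∀ x y, d x y = 3 → (Finset.univ.filter (fun z => d x z = 1 ∧ d y z = 3)).card = a3
  a2pos : 0 < a2
  c2pos : 0 < c2
  hb : b < -1
  rel : (a2 : ℝ) = (1 + b) * (1 + b - c2)
  bal : ∀ j, ∃ L : ℕ → ℝ, ∀ x y w,
    ∑ z ∈ Finset.univ.filter (fun z => d x z = 1 ∧ d y z = j), (b⁻¹) ^ d z w
     - ∑ z ∈ Finset.univ.filter (fun z => d x z = j ∧ d y z = 1), (b⁻¹) ^ d z w
     = L (d x y) * ((b⁻¹) ^ d x w - (b⁻¹) ^ d y w)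

namespace GData
open Finset

variable {V : Type*} [Fintype V] [DecidableEq V] {d : V → V → ℕ} {b : ℝ} {a2 c2 a3 : ℕ}

/-- the set A -/
def NA (d : V → V → ℕ) (x y : V) : Finset V := univ.filter (fun z => d x z = 1 ∧ d y z = 2)
/-- the set C -/
def NC (d : V → V → ℕ) (x y : V) : Finset V := univ.filter (fun z => d x z = 1 ∧ d y z = 1)
/-- the set A and C -/
def NB (d : V → V → ℕ) (x y : V) : Finset V := univ.filter (fun z => d x z = 1 ∧ d y z ≤ 2)

lemma self (H : GData d b a2 c2 a3) (x : V) : d x x = 0 := (H.zero x x).2 rfl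

lemma NC_comm (x y : V) : NC d x y = NC d y x := by
  ext z; simp [NC, and_comm]

lemma NB_eq (H : GData d b a2 c2 a3) {x y : V} (h : d x y = 2) : NB d x y = NA d x y ∪ NC d x y := by
  ext z
  simp only [NB, NA, NC, mem_union, mem_filter, mem_univ, true_and]
  have := H.tri x z y
  have := H.symm y z
  omega

lemma NAC_disj (x y : V) : Disjoint (NA d x y) (NC d x y) := by
  rw [Finset.disjoint_left]
  intro z
  simp only [NA, NC, mem_filter, mem_univ, true_and]
  omega

lemma NB_card (H : GData d b a2 c2 a3) {x y : V} (h : d x y = 2) : (NB d x y).card = a2 + c2 := by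
  rw [H.NB_eq h, card_union_of_disjoint (NAC_disj x y), NA, NC, H.ha x y h, H.hc x y h]

lemma exC (H : GData d b a2 c2 a3) {x y : V} (h : d x y = 2) : ∃ z, d x z = 1 ∧ d y z = 1 := by
  have h1 := H.hc x y h
  have h2 := H.c2pos
  rw [← h1, card_pos] at h2
  obtain ⟨z, hz⟩ := h2
  exact ⟨z, by simpa using hz⟩

lemma exA (H : GData d b a2 c2 a3) {x y : V} (h : d x y = 2) : ∃ z, d x z = 1 ∧ d y z = 2 := by
  have h1 := H.ha x y h
  have h2 := H.a2pos
  rw [← h1, card_pos] at h2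
  obtain ⟨z, hz⟩ := h2
  exact ⟨z, by simpa using hz⟩

/-- two distinct neighbours of a vertex are at distance two -/
lemma two (H : GData d b a2 c2 a3) {x y z : V} (h1 : d x y = 1) (h2 : d x z = 1) (h3 : y ≠ z) :
    d y z = 2 := by
  have e1 := H.tri y x z
  have e2 := H.symm x y
  have e3 : d y z ≠ 0 := fun h => h3 ((H.zero y z).1 h)
  have e4 : d y z ≠ 1 := fun h => H.notri x y z h1 h h2
  omega

lemma master (H : GData d b a2 c2 a3) {x y : V} (h : d x y = 2) (w : V) :
    ∑ z ∈ NA d x y, (b⁻¹) ^ d z w - ∑ z ∈ NA d y x, (b⁻¹) ^ d z w =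
      (a2 / (1 + b)) * ((b⁻¹) ^ d x w - (b⁻¹) ^ d y w) := by
  obtain ⟨L, hL⟩ := H.bal 2
  have hsw : ∀ w, ∑ z ∈ univ.filter (fun z => d x z = 2 ∧ d y z = 1), (b⁻¹) ^ d z w
      = ∑ z ∈ NA d y x, (b⁻¹) ^ d z w := by
    intro w; rw [NA]; congr 1; ext z; simp [and_comm]
  have h1 := hL x y x
  rw [hsw] at h1
  have e1 : ∑ z ∈ univ.filter (fun z => d x z = 1 ∧ d y z = 2), (b⁻¹) ^ d z x = a2 * b⁻¹ := by
    rw [← H.ha x y h, ← nsmul_eq_mul, ← Finset.sum_const]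
    refine Finset.sum_congr rfl fun z hz => ?_
    simp only [mem_filter] at hz
    rw [H.symm z x, hz.2.1, pow_one]
  have e2 : ∑ z ∈ NA d y x, (b⁻¹) ^ d z x = a2 * b⁻¹ ^ 2 := by
    rw [← H.ha y x (by rw [H.symm]; exact h), ← nsmul_eq_mul, ← Finset.sum_const, NA]
    refine Finset.sum_congr rfl fun z hz => ?_
    simp only [mem_filter] at hz
    rw [H.symm z x, hz.2.2]
  have hb := H.hb
  rw [e1, e2, H.self, H.symm y x, h] at h1
  have hLv : L 2 = a2 / (1 + b) := by
    have b0 : b ≠ 0 := by linarith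
    have b1 : 1 + b ≠ 0 := by intro h; linarith
    have b2 : b - 1 ≠ 0 := by intro h; linarith
    rw [eq_div_iff b1]
    field_simp at h1
    apply mul_left_cancel₀ b2
    linear_combination -h1
  have h2 := hL x y w
  rw [hsw, h, hLv] at h2
  exact h2

lemma bq (hb : b < -1) (n m : ℕ) : b ^ (n + m) * (b⁻¹) ^ n = b ^ m := by
  have b0 : b ≠ 0 := by intro h; linarith
  rw [pow_add, inv_pow]
  field_simp

lemma master_mul (H : GData d b a2 c2 a3) {x y : V} (h : d x y = 2) (w : V) (n : ℕ) :
    ∑ z ∈ NA d x y, b ^ n * (b⁻¹) ^ d z w - ∑ z ∈ NA d y x, b ^ n * (b⁻¹) ^ d z w =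
      (a2 / (1 + b)) * (b ^ n * (b⁻¹) ^ d x w - b ^ n * (b⁻¹) ^ d y w) := by
  rw [← Finset.mul_sum, ← Finset.mul_sum, ← mul_sub, H.master h]; ring

lemma lem1 (H : GData d b a2 c2 a3) {x y w : V} (h : d x y = 2) (hw : d x w = d y w + 2) :
    (∀ z, d x z = 1 → d y z = 2 → d z w = d x w) ∧
    (∀ z, d y z = 1 → d x z = 2 → d z w = d y w + 1) := by
  have hb := H.hb
  have hm := H.master_mul h w (d y w + 2)
  set i := d y w with hi
  rw [hw] at hm
  have p1 := bq hb (i+2) 0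
  have p2 := bq hb (i+1) 1
  have p3 := bq hb i 2
  rw [p3] at hm
  rw [add_zero, pow_zero] at p1
  rw [p1] at hm
  have v1 : ∀ z ∈ NA d x y, d z w = i + 1 ∨ d z w = i + 2 := by
    intro z hz
    simp only [NA, mem_filter, mem_univ, true_and] at hz
    have := H.tri x z w
    have := H.tri z y w
    have := H.symm z y
    omega
  have v2 : ∀ z ∈ NA d y x, d z w = i ∨ d z w = i + 1 := by
    intro z hz
    simp only [NA, mem_filter, mem_univ, true_and] at hz
    have := H.tri x z w
    have := H.tri z y w
    have := H.symm z y
    omega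
  have f1 : ∀ z ∈ NA d x y, 0 ≤ 1 - b ^ (i+2) * (b⁻¹) ^ d z w := by
    intro z hz
    rcases v1 z hz with h1 | h1 <;> rw [h1]
    · rw [show i + 2 = i + 1 + 1 from rfl, p2]; linarith
    · rw [p1]; linarith
  have f2 : ∀ z ∈ NA d y x, 0 ≤ b ^ (i+2) * (b⁻¹) ^ d z w - b := by
    intro z hz
    rcases v2 z hz with h1 | h1 <;> rw [h1]
    · rw [p3]; nlinarith
    · rw [show i + 2 = i + 1 + 1 from rfl, p2]; linarith
  have c1 : (NA d x y).card = a2 := H.ha x y h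
  have c2' : (NA d y x).card = a2 := H.ha y x (by rw [H.symm]; exact h)
  have s1 : ∑ z ∈ NA d x y, (1 - b ^ (i+2) * (b⁻¹) ^ d z w) =
      a2 - ∑ z ∈ NA d x y, b ^ (i+2) * (b⁻¹) ^ d z w := by
    rw [Finset.sum_sub_distrib, Finset.sum_const, c1]; simp
  have s2 : ∑ z ∈ NA d y x, (b ^ (i+2) * (b⁻¹) ^ d z w - b) =
      ∑ z ∈ NA d y x, b ^ (i+2) * (b⁻¹) ^ d z w - a2 * b := by
    rw [Finset.sum_sub_distrib, Finset.sum_const, c2']; simp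
  have n1 := Finset.sum_nonneg f1
  have n2 := Finset.sum_nonneg f2
  have rr : (a2 : ℝ) / (1 + b) * (1 - b ^ 2) = a2 * (1 - b) := by
    have b1 : 1 + b ≠ 0 := by intro h; linarith
    field_simp
    ring
  rw [rr] at hm
  have z1 : ∑ z ∈ NA d x y, (1 - b ^ (i+2) * (b⁻¹) ^ d z w) = 0 := by linarith
  have z2 : ∑ z ∈ NA d y x, (b ^ (i+2) * (b⁻¹) ^ d z w - b) = 0 := by linarith
  rw [Finset.sum_eq_zero_iff_of_nonneg f1] at z1
  rw [Finset.sum_eq_zero_iff_of_nonneg f2] at z2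
  constructor
  · intro z hz1 hz2
    have hz : z ∈ NA d x y := by simp [NA, hz1, hz2]
    have := z1 z hz
    rcases v1 z hz with h1 | h1
    · rw [h1, show i + 2 = i + 1 + 1 from rfl, p2] at this; linarith
    · omega
  · intro z hz1 hz2
    have hz : z ∈ NA d y x := by simp [NA, hz1, hz2]
    have := z2 z hz
    rcases v2 z hz with h1 | h1
    · rw [h1, p3] at this; nlinarith
    · omega

lemma nopar (H : GData d b a2 c2 a3) {v x g u : V} (h1 : d v x = 1) (h2 : d g u = 1)
    (h3 : d v u = 4) (h4 : d v g = 3) (h5 : d x g = 3) (h6 : d x u = 3) : False := by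
  have hb := H.hb
  have hq : b⁻¹ < 0 := by rw [inv_lt_zero]; linarith
  obtain ⟨L, hL⟩ := H.bal 3
  have q1 := hL v g v
  have q2 := hL v g u
  set q := b⁻¹ with hqq
  have c1 := H.ha3 v g h4
  have c2' : (univ.filter (fun z => d v z = 3 ∧ d g z = 1)).card = a3 := by
    rw [← H.ha3 g v (by rw [H.symm]; exact h4)]
    congr 1; ext z; simp [and_comm]
  have e1 : ∑ z ∈ univ.filter (fun z => d v z = 1 ∧ d g z = 3), q ^ d z v = a3 * q := by
    rw [← c1, ← nsmul_eq_mul, ← Finset.sum_const]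
    refine Finset.sum_congr rfl fun z hz => ?_
    simp only [mem_filter] at hz
    rw [H.symm z v, hz.2.1, pow_one]
  have e2 : ∑ z ∈ univ.filter (fun z => d v z = 3 ∧ d g z = 1), q ^ d z v = a3 * q ^ 3 := by
    rw [← c2', ← nsmul_eq_mul, ← Finset.sum_const]
    refine Finset.sum_congr rfl fun z hz => ?_
    simp only [mem_filter] at hz
    rw [H.symm z v, hz.2.1]
  have e3 : ∑ z ∈ univ.filter (fun z => d v z = 3 ∧ d g z = 1), q ^ d z u = a3 * q ^ 2 := by
    rw [← c2', ← nsmul_eq_mul, ← Finset.sum_const]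
    refine Finset.sum_congr rfl fun z hz => ?_
    simp only [mem_filter] at hz
    rw [H.two hz.2.2 h2]
    rintro rfl
    omega
  have e4 : ∑ z ∈ univ.filter (fun z => d v z = 1 ∧ d g z = 3), q ^ d z u < a3 * q ^ 4 := by
    rw [← c1, ← nsmul_eq_mul, ← Finset.sum_const]
    have q34 : q ^ 3 < q ^ 4 := by
      have : 0 < q ^ 2 := by nlinarith
      nlinarith
    refine Finset.sum_lt_sum ?_ ⟨x, ?_, ?_⟩
    · intro z hz
      simp only [mem_filter, mem_univ, true_and] at hz
      have := H.tri v z u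
      have := H.tri z g u
      have := H.symm z g
      have : d z u = 3 ∨ d z u = 4 := by omega
      rcases this with h | h <;> rw [h]
      exact q34.le
    · have := H.symm g x
      simp; omega
    · rw [h6]; exact q34
  rw [e1, e2, H.self, H.symm g v, h4] at q1
  rw [e3, h3, h2, h4] at q2
  have : L 3 * (q ^ 4 - q ^ 1) = - q * (L 3 * (q ^ 0 - q ^ 3)) := by ring
  rw [this, ← q1] at q2
  nlinarith

section Om
variable {p o : V}

/-- the class -/
def CC (d : V → V → ℕ) (p o : V) : Finset V := univ.filter (fun z => d p z = 2 ∧ NB d p z = NB d p o)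

lemma mem_CC {z : V} : z ∈ CC d p o ↔ d p z = 2 ∧ NB d p z = NB d p o := by simp [CC]

lemma mem_NB {x y z : V} : z ∈ NB d x y ↔ d x z = 1 ∧ d y z ≤ 2 := by simp [NB]

lemma CC1 (H : GData d b a2 c2 a3) {z z' : V} (hz : z ∈ CC d p o) (h : d z z' = 1)
    (h2 : d p z' = 2) : z' ∈ CC d p o := by
  rw [mem_CC] at hz ⊢
  refine ⟨h2, ?_⟩
  rw [← hz.2]
  refine Finset.eq_of_subset_of_card_le ?_ (by rw [H.NB_card hz.1, H.NB_card h2])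
  intro v hv
  rw [mem_NB] at hv ⊢
  refine ⟨hv.1, ?_⟩
  by_contra hcon
  have s1 := H.symm p z
  have s2 := H.symm p v
  have s3 := H.symm v z
  have := H.tri z p v
  have h3 : d z v = d p v + 2 := by omega
  have := (H.lem1 (x := z) (y := p) (w := v) (by omega) h3).1 z' h h2
  omega

lemma CC2 (H : GData d b a2 c2 a3) {r z : V} (hr : r ∈ NB d p o) (hz : z ∈ CC d p o) :
    d r z ≤ 2 ∧ r ≠ z ∧ (d r z = 1 ∨ (d r z = 2 ∧ ∃ m ∈ CC d p o, d m z = 1 ∧ d m r = 1)) := by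
  have hz' := mem_CC.1 hz
  rw [← hz'.2, mem_NB] at hr
  have s := H.symm z r
  have hne : r ≠ z := by rintro rfl; omega
  refine ⟨by omega, hne, ?_⟩
  have h0 : d r z ≠ 0 := fun h => hne ((H.zero _ _).1 h)
  by_cases h1 : d r z = 1
  · exact Or.inl h1
  right
  have h2 : d r z = 2 := by omega
  refine ⟨h2, ?_⟩
  obtain ⟨m, hm1, hm2⟩ := H.exC h2
  have : d p m = 2 := by
    apply H.two (x := r) (by rw [H.symm]; exact hr.1) hm1
    rintro rfl
    have := H.symm z p
    omega
  exact ⟨m, H.CC1 hz hm2 this, by rw [H.symm]; exact hm2, by rw [H.symm]; exact hm1⟩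

lemma CC4 (H : GData d b a2 c2 a3) {z z' m : V} (hz : z ∈ CC d p o) (hz' : z' ∈ CC d p o)
    (h : d z z' = 2) (hm : d z m = 1) (hm' : d z' m = 1) : d p m ≤ 2 := by
  rw [mem_CC] at hz hz'
  by_contra hcon
  have t := H.tri p z m
  have h3 : d p m = 3 := by omega
  have l1 := (H.lem1 (x := p) (y := z) (w := m) hz.1 (by omega)).1
  have l2 := (H.lem1 (x := p) (y := z') (w := m) hz'.1 (by omega)).1
  have sub : insert m (NC d p z) ⊆ NC d z z' := by
    intro r hr
    rw [mem_insert] at hr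
    rcases hr with rfl | hr
    · simp [NC, hm, hm']
    simp only [NC, mem_filter, mem_univ, true_and] at hr ⊢
    refine ⟨hr.2, ?_⟩
    have hN : r ∈ NB d p z' := by rw [hz'.2, ← hz.2, mem_NB]; omega
    rw [mem_NB] at hN
    have h0 : d z' r ≠ 0 := by
      intro h0
      have := (H.zero _ _).1 h0
      subst this
      omega
    by_contra h1
    have h2 : d z' r = 2 := by omega
    have := l2 r hr.1 h2
    have := H.tri r z m
    have := H.symm r z
    omega
  have := card_le_card sub
  rw [card_insert_of_notMem (by simp [NC]; omega), NC, NC, H.hc _ _ hz.1, H.hc _ _ h] at this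
  omega

lemma CC5 (H : GData d b a2 c2 a3) {z z' m : V} (hz : z ∈ CC d p o) (hz' : z' ∈ CC d p o)
    (h : d z z' = 2) (hm : d z m = 1) (hpm : d p m = 2) : d m z' ≤ 2 := by
  have hzz := mem_CC.1 hz
  have hzz' := mem_CC.1 hz'
  have hzp : d z p = 2 := by rw [H.symm]; exact hzz.1
  have hb := H.hb
  have ms := H.master hzp z'
  rw [h, hzz'.1, sub_self, mul_zero, sub_eq_zero] at ms
  have hq : b⁻¹ < 0 := by rw [inv_lt_zero]; linarith
  set q := b⁻¹ with hqq
  -- values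
  have v1 : ∀ r ∈ NA d p z, d r z' = 1 ∨ d r z' = 2 := by
    intro r hr
    simp only [NA, mem_filter, mem_univ, true_and] at hr
    have hN : r ∈ NB d p o := by rw [← hzz.2, mem_NB]; omega
    have := H.CC2 hN hz'
    omega
  have v2 : ∀ r ∈ NA d z p, d r z' = 1 ∨ d r z' = 2 ∨ d r z' = 3 := by
    intro r hr
    simp only [NA, mem_filter, mem_univ, true_and] at hr
    have := H.tri r z z'
    have := H.tri z r z'
    have := H.symm z r
    omega
  -- counts
  have k1 : ((NA d p z).filter (fun r => d r z' = 1)).card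
      + ((NC d p z).filter (fun r => d r z' = 1)).card = c2 := by
    rw [← H.hc p z' hzz'.1, ← card_union_of_disjoint
      (Finset.disjoint_filter_filter (NAC_disj p z)), ← filter_union, ← H.NB_eq hzz.1]
    congr 1
    ext r
    simp only [mem_filter, mem_univ, true_and, hzz.2, ← hzz'.2, mem_NB]
    have := H.symm r z'
    omega
  have k2 : ((NA d z p).filter (fun r => d r z' = 1)).card
      + ((NC d z p).filter (fun r => d r z' = 1)).card = c2 := by
    rw [← H.hc z z' h, ← card_union_of_disjoint
      (Finset.disjoint_filter_filter (NAC_disj z p)), ← filter_union, ← H.NB_eq hzp]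
    congr 1
    ext r
    simp only [mem_filter, mem_univ, true_and, mem_NB]
    have := H.symm r z'
    constructor
    · intro hr; omega
    · intro hr
      have := H.CC4 hz hz' h hr.1 hr.2
      omega
  rw [NC_comm z p] at k2
  have k3 : ((NA d z p).filter (fun r => d r z' = 1)).card
      = ((NA d p z).filter (fun r => d r z' = 1)).card := by omega
  have s1 : ∑ r ∈ NA d p z, (q ^ d r z' - q ^ 2) =
      ((NA d p z).filter (fun r => d r z' = 1)).card * (q - q ^ 2) := by
    rw [card_filter, Nat.cast_sum, Finset.sum_mul]
    refine Finset.sum_congr rfl fun r hr => ?_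
    rcases v1 r hr with h1 | h1 <;> simp [h1]
  have s2 : ∑ r ∈ NA d z p, (q ^ d r z' - q ^ 2) = 
      ((NA d z p).filter (fun r => d r z' = 1)).card * (q - q ^ 2) + 
      ((NA d z p).filter (fun r => d r z' = 3)).card * (q ^ 3 - q ^ 2) := by
    rw [card_filter, card_filter, Nat.cast_sum, Nat.cast_sum, Finset.sum_mul, Finset.sum_mul,
      ← Finset.sum_add_distrib]
    refine Finset.sum_congr rfl fun r hr => ?_
    rcases v2 r hr with h1 | h1 | h1 <;> simp [h1]
  rw [Finset.sum_sub_distrib, Finset.sum_const, NA, H.ha _ _ hzz.1, ← NA] at s1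
  rw [Finset.sum_sub_distrib, Finset.sum_const, NA, H.ha _ _ hzp, ← NA, ms, k3, s1] at s2
  have z0 : (((NA d z p).filter (fun r => d r z' = 3)).card : ℝ) * (q ^ 3 - q ^ 2) = 0 := by
    linarith
  have : q ^ 3 - q ^ 2 ≠ 0 := by
    have : 0 < q ^ 2 := by nlinarith
    nlinarith
  have z1 := (mul_eq_zero.1 z0).resolve_right this
  rw [Nat.cast_eq_zero, card_eq_zero] at z1
  have hmm : m ∈ NA d z p := by simp [NA, hm, hpm]
  rcases v2 m hmm with h1 | h1 | h1
  · omega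
  · omega
  · have : m ∈ (NA d z p).filter (fun r => d r z' = 3) := by simp [hmm, h1]
    rw [z1] at this
    simp at this

lemma CC6 (H : GData d b a2 c2 a3) {z z' : V} (hz : z ∈ CC d p o) (hz' : z' ∈ CC d p o) :
    d z z' ≤ 2 := by
  have hzz := mem_CC.1 hz
  have hzz' := mem_CC.1 hz'
  obtain ⟨r, hr1, hr2⟩ := H.exC hzz.1
  have hN : r ∈ NB d p o := by rw [← hzz.2, mem_NB]; omega
  have srz := H.symm z r
  rcases (H.CC2 hN hz').2.2 with h1 | ⟨h2, m, hm, hm1, hm2⟩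
  · have := H.tri z r z'
    omega
  · by_cases hmz : m = z
    · subst hmz; omega
    have s := H.symm m r
    have h3 : d m z = 2 := H.two (x := r) (by omega) (by omega) hmz
    have := H.CC5 hm hz h3 hm1 hzz'.1
    rw [H.symm]; exact this

end Om
end GData

/-- regular diameter two subset -/
structure IsOm {V : Type*} (d : V → V → ℕ) (k : ℕ) (S : Finset V) : Prop where
  diam : ∀ g ∈ S, ∀ h ∈ S, d g h ≤ 2
  deg : ∀ g ∈ S, (S.filter (fun m => d g m = 1)).card = k

namespace GData
open Finset

variable {V : Type*} [Fintype V] [DecidableEq V] {d : V → V → ℕ} {b : ℝ} {a2 c2 a3 : ℕ}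

section Om2
variable {p o : V}

/-- the subset -/
def Om (d : V → V → ℕ) (p o : V) : Finset V := insert p (NB d p o ∪ CC d p o)

lemma mem_Om {m : V} : m ∈ Om d p o ↔ m = p ∨ m ∈ NB d p o ∨ m ∈ CC d p o := by simp [Om]

lemma degp (H : GData d b a2 c2 a3) : (Om d p o).filter (fun m => d p m = 1) = NB d p o := by
  ext m
  rw [mem_filter, mem_Om]
  constructor
  · rintro ⟨rfl | h | h, h1⟩
    · have := H.self m; omega
    · exact h
    · have := (mem_CC.1 h).1; omega
  · intro h
    exact ⟨Or.inr (Or.inl h), (mem_NB.1 h).1⟩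

lemma degC (H : GData d b a2 c2 a3) {z : V} (hz : z ∈ CC d p o) :
    (Om d p o).filter (fun m => d z m = 1) = NB d z p := by
  have hz' := mem_CC.1 hz
  have sz := H.symm z p
  ext m
  rw [mem_filter, mem_Om, mem_NB (x := z)]
  constructor
  · rintro ⟨rfl | h | h, h1⟩
    · omega
    · have := (mem_NB.1 h).1; omega
    · have := (mem_CC.1 h).1; omega
  · rintro ⟨h1, h2⟩
    refine ⟨Or.inr ?_, h1⟩
    have h0 : d p m ≠ 0 := by
      intro h0
      have := (H.zero _ _).1 h0
      subst this
      omega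
    by_cases h3 : d p m = 1
    · left; rw [← hz'.2, mem_NB]; omega
    · right; exact H.CC1 hz h1 (by omega)

lemma degN (H : GData d b a2 c2 a3) {r : V} (hr : r ∈ NB d p o) :
    (Om d p o).filter (fun m => d r m = 1) = insert p ((CC d p o).filter (fun m => d r m = 1)) := by
  have hr' := mem_NB.1 hr
  have s := H.symm r p
  ext m
  rw [mem_filter, mem_Om, mem_insert, mem_filter]
  constructor
  · rintro ⟨rfl | h | h, h1⟩
    · exact Or.inl rfl
    · exact (H.notri p r m hr'.1 h1 (mem_NB.1 h).1).elim
    · exact Or.inr ⟨h, h1⟩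
  · rintro (rfl | ⟨h, h1⟩)
    · exact ⟨Or.inl rfl, by omega⟩
    · exact ⟨Or.inr (Or.inr h), h1⟩

lemma Om_diam (H : GData d b a2 c2 a3) : ∀ g ∈ Om d p o, ∀ h ∈ Om d p o, d g h ≤ 2 := by
  intro g hg h hh
  rw [mem_Om] at hg hh
  have s := H.symm g h
  rcases hg with rfl | hg | hg <;> rcases hh with rfl | hh | hh
  · have := H.self h; omega
  · have := (mem_NB.1 hh).1; omega
  · have := (mem_CC.1 hh).1; omega
  · have := (mem_NB.1 hg).1; omega
  · have := (mem_NB.1 hh).1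
    have := (mem_NB.1 hg).1
    have := H.tri g p h
    have := H.symm g p
    omega
  · exact (H.CC2 hg hh).1
  · have := (mem_CC.1 hg).1; omega
  · have := (H.CC2 hh hg).1; omega
  · exact H.CC6 hg hh

lemma count1 (H : GData d b a2 c2 a3) {r : V} (hr : r ∈ NB d p o) :
    ((CC d p o).filter (fun m => d r m = 1)).card * (a2 + c2) = c2 * (CC d p o).card := by
  have hr' := mem_NB.1 hr
  have s := H.symm r p
  have h1 := Finset.card_mul_eq_card_mul (s := (CC d p o).filter (fun m => d r m = 1))
    (t := (CC d p o).filter (fun m => ¬ d r m = 1)) (fun g h => d g h = 1) (m := a2) (n := c2) ?_ ?_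
  · have h2 := Finset.card_filter_add_card_filter_not (s := CC d p o) (fun m => d r m = 1)
    rw [← h2]
    linarith
  · intro z hz
    rw [mem_filter] at hz
    have hz' := mem_CC.1 hz.1
    rw [← H.ha z p (by rw [H.symm]; exact hz'.1)]
    congr 1
    ext m
    simp only [bipartiteAbove, mem_filter, mem_univ, true_and]
    constructor
    · rintro ⟨⟨h1, h2⟩, h3⟩
      exact ⟨h3, (mem_CC.1 h1).1⟩
    · rintro ⟨h1, h2⟩
      exact ⟨⟨H.CC1 hz.1 h1 h2, fun h => H.notri r z m hz.2 h1 h⟩, h1⟩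
  · intro z hz
    rw [mem_filter] at hz
    have hz' := mem_CC.1 hz.1
    have h2 : d r z = 2 := by
      rcases (H.CC2 hr hz.1).2.2 with h | h
      · exact (hz.2 h).elim
      · exact h.1
    rw [← H.hc r z h2]
    congr 1
    ext m
    simp only [bipartiteBelow, mem_filter, mem_univ, true_and]
    have sm := H.symm m z
    constructor
    · rintro ⟨⟨h1, h2⟩, h3⟩
      exact ⟨h2, by omega⟩
    · rintro ⟨h1, h2⟩
      have : d p m = 2 := by
        apply H.two (x := r) (by omega) h1
        rintro rfl
        omega
      exact ⟨⟨H.CC1 hz.1 h2 this, h1⟩, by omega⟩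

lemma Om_card (H : GData d b a2 c2 a3) (h : d p o = 2) :
    (Om d p o).card = 1 + (a2 + c2) + (CC d p o).card := by
  rw [Om, card_insert_of_notMem, card_union_of_disjoint, H.NB_card h]
  · ring
  · rw [Finset.disjoint_left]
    intro m h1 h2
    have := (mem_NB.1 h1).1
    have := (mem_CC.1 h2).1
    omega
  · rw [mem_union, mem_NB, mem_CC, H.self]
    omega

lemma countz (H : GData d b a2 c2 a3) (h : d p o = 2) (F : ℕ)
    (hF : ∀ r ∈ NB d p o, ((CC d p o).filter (fun m => d r m = 1)).card = F) :
    a2 * (a2 + c2 - 1) + c2 * F = c2 * (CC d p o).card := by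
  have ho : o ∈ CC d p o := mem_CC.2 ⟨h, rfl⟩
  have hoO : o ∈ Om d p o := mem_Om.2 (Or.inr (Or.inr ho))
  have h' : d o p = 2 := by rw [H.symm]; exact h
  have hP := H.degC ho
  set P := (Om d p o).filter (fun m => d o m = 1) with hPd
  set Q := (Om d p o).filter (fun m => d o m = 2) with hQd
  have cP : P.card = a2 + c2 := by rw [hP, H.NB_card h']
  have cQ : Q.card = (CC d p o).card := by
    have e : Om d p o = insert o (P ∪ Q) := by
      ext m
      simp only [mem_insert, mem_union, hPd, hQd, mem_filter]
      constructor
      · intro hm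
        have := H.Om_diam o hoO m hm
        by_cases h0 : d o m = 0
        · left; exact ((H.zero _ _).1 h0).symm
        · right
          rw [← and_or_left]
          exact ⟨hm, by omega⟩
      · rintro (rfl | hm | hm)
        · exact hoO
        · exact hm.1
        · exact hm.1
    have c := congrArg Finset.card e
    rw [H.Om_card h, card_insert_of_notMem, card_union_of_disjoint, cP] at c
    · omega
    · rw [Finset.disjoint_left]
      intro m h1 h2
      rw [hPd, mem_filter] at h1
      rw [hQd, mem_filter] at h2
      omega
    · rw [mem_union, hPd, hQd, mem_filter, mem_filter, H.self]
      omega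
  have key := Finset.sum_card_bipartiteAbove_eq_sum_card_bipartiteBelow
    (s := P) (t := Q) (fun g h => d g h = 1)
  have r1 : ∀ m ∈ Q, (bipartiteBelow (fun g h => d g h = 1) P m).card = c2 := by
    intro m hm
    rw [hQd, mem_filter] at hm
    rw [← H.hc o m hm.2, hP]
    congr 1
    ext g
    simp only [bipartiteBelow, mem_filter, mem_univ, true_and, mem_NB]
    have sg := H.symm m g
    constructor
    · rintro ⟨⟨h1, h2⟩, h3⟩
      exact ⟨h1, by omega⟩
    · rintro ⟨h1, h2⟩
      refine ⟨⟨h1, ?_⟩, by omega⟩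
      rcases mem_Om.1 hm.1 with rfl | hm' | hm'
      · omega
      · have := (mem_NB.1 hm').1
        have := H.tri p m g
        omega
      · exact H.CC4 ho hm' hm.2 h1 h2
  have r2 : ∀ y ∈ P, (bipartiteAbove (fun g h => d g h = 1) Q y).card =
      ((Om d p o).filter (fun m => d y m = 1)).card - 1 := by
    intro y hy
    rw [hPd, mem_filter] at hy
    have sy := H.symm o y
    rw [← Finset.card_erase_of_mem (a := o) (by rw [mem_filter]; exact ⟨hoO, by omega⟩)]
    congr 1
    ext m
    simp only [bipartiteAbove, mem_filter, mem_erase, hQd]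
    constructor
    · rintro ⟨⟨h1, h2⟩, h3⟩
      refine ⟨?_, h1, h3⟩
      rintro rfl
      rw [H.self] at h2; omega
    · rintro ⟨h1, h2, h3⟩
      exact ⟨⟨h2, H.two (x := y) (by omega) h3 (Ne.symm h1)⟩, h3⟩
  rw [Finset.sum_congr rfl r1, Finset.sum_congr rfl r2, Finset.sum_const, cQ, hP, H.NB_eq h',
    Finset.sum_union (NAC_disj o p)] at key
  have t1 : ∀ y ∈ NA d o p, ((Om d p o).filter (fun m => d y m = 1)).card - 1 = a2 + c2 - 1 := by
    intro y hy
    simp only [NA, mem_filter, mem_univ, true_and] at hy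
    have hy2 : d y p = 2 := by rw [H.symm]; exact hy.2
    rw [H.degC (H.CC1 ho hy.1 hy.2), H.NB_card hy2]
  have t2 : ∀ y ∈ NC d o p, ((Om d p o).filter (fun m => d y m = 1)).card - 1 = F := by
    intro y hy
    simp only [NC, mem_filter, mem_univ, true_and] at hy
    have hN : y ∈ NB d p o := mem_NB.2 (by omega)
    rw [H.degN hN, card_insert_of_notMem, hF y hN]
    · omega
    · rw [mem_filter, mem_CC, H.self]; omega
  rw [Finset.sum_congr rfl t1, Finset.sum_congr rfl t2, Finset.sum_const, Finset.sum_const,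
    NA, NC, H.ha _ _ h', H.hc _ _ h'] at key
  simp only [smul_eq_mul] at key
  linarith

lemma exOm (H : GData d b a2 c2 a3) (h : d p o = 2) :
    ∃ S : Finset V, p ∈ S ∧ o ∈ S ∧ IsOm d (a2 + c2) S := by
  have ho : o ∈ CC d p o := mem_CC.2 ⟨h, rfl⟩
  refine ⟨Om d p o, mem_Om.2 (Or.inl rfl), mem_Om.2 (Or.inr (Or.inr ho)), H.Om_diam, ?_⟩
  have hF : ∀ r ∈ NB d p o, ((CC d p o).filter (fun m => d r m = 1)).card = a2 + c2 - 1 := by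
    have a0 := H.a2pos
    have c0 := H.c2pos
    intro r hr
    have e1 := H.count1 hr
    have e2 := H.countz h ((CC d p o).filter (fun m => d r m = 1)).card (by
      intro r' hr'
      have := H.count1 hr'
      rw [← e1] at this
      exact Nat.eq_of_mul_eq_mul_right (by omega) this)
    rw [← e1] at e2
    apply Nat.eq_of_mul_eq_mul_left a0
    linarith
  intro g hg
  rcases mem_Om.1 hg with rfl | hg | hg
  · rw [H.degp, H.NB_card h]
  · have a0 := H.a2pos
    rw [H.degN hg, card_insert_of_notMem, hF g hg]
    · omega
    · rw [mem_filter, mem_CC, H.self]; omega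
  · have hg2 : d g p = 2 := by rw [H.symm]; exact (mem_CC.1 hg).1
    rw [H.degC hg, H.NB_card hg2]

end Om2
end GData

namespace GData
open Finset

variable {V : Type*} [Fintype V] [DecidableEq V] {d : V → V → ℕ} {b : ℝ} {a2 c2 a3 : ℕ}

lemma clos (H : GData d b a2 c2 a3) {S : Finset V} (hS : IsOm d (a2 + c2) S) {g h : V}
    (hg : g ∈ S) (hh : h ∈ S) (hgh : d g h = 2) : S.filter (fun m => d g m = 1) = NB d g h := by
  apply Finset.eq_of_subset_of_card_le
  · intro m hm
    rw [mem_filter] at hm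
    exact mem_NB.2 ⟨hm.2, hS.diam h hh m hm.1⟩
  · rw [H.NB_card hgh, hS.deg g hg]

lemma clos_mem (H : GData d b a2 c2 a3) {S : Finset V} (hS : IsOm d (a2 + c2) S) {g h m : V}
    (hg : g ∈ S) (hh : h ∈ S) (hgh : d g h = 2) (h1 : d g m = 1) (h2 : d h m ≤ 2) : m ∈ S := by
  have : m ∈ NB d g h := mem_NB.2 ⟨h1, h2⟩
  rw [← H.clos hS hg hh hgh, mem_filter] at this
  exact this.1

/-- the harmonic function -/
noncomputable def Fn (d : V → V → ℕ) (b : ℝ) (a2 : ℕ) (S : Finset V) (v g : V) : ℝ :=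
  ∑ m ∈ S.filter (fun m => d g m = 1), (b⁻¹) ^ d m v - (a2 / (1 + b)) * (b⁻¹) ^ d g v

lemma Fn2 (H : GData d b a2 c2 a3) {S : Finset V} (hS : IsOm d (a2 + c2) S) {g h : V}
    (hg : g ∈ S) (hh : h ∈ S) (hgh : d g h = 2) (v : V) : Fn d b a2 S v g = Fn d b a2 S v h := by
  have hhg : d h g = 2 := by rw [H.symm]; exact hgh
  have m := H.master hgh v
  rw [Fn, Fn, H.clos hS hg hh hgh, H.clos hS hh hg hhg, H.NB_eq hgh, H.NB_eq hhg,
    Finset.sum_union (NAC_disj _ _), Finset.sum_union (NAC_disj _ _), NC_comm h g]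
  linarith

lemma Fn_const (H : GData d b a2 c2 a3) {S : Finset V} (hS : IsOm d (a2 + c2) S) {g h : V}
    (hg : g ∈ S) (hh : h ∈ S) (v : V) : Fn d b a2 S v g = Fn d b a2 S v h := by
  have hd := hS.diam g hg h hh
  by_cases h0 : d g h = 0
  · rw [(H.zero _ _).1 h0]
  by_cases h2 : d g h = 2
  · exact H.Fn2 hS hg hh h2 v
  have h1 : d g h = 1 := by omega
  have h1' : d h g = 1 := by rw [H.symm]; exact h1
  have : ∃ h' ∈ S.filter (fun m => d h m = 1), h' ≠ g := by
    apply Finset.exists_mem_ne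
    rw [hS.deg h hh]
    have := H.a2pos
    have := H.c2pos
    omega
  obtain ⟨h', hm, hne⟩ := this
  rw [mem_filter] at hm
  have h2' : d h' g = 2 := H.two hm.2 h1' hne
  obtain ⟨m, m1, m2⟩ := H.exA h2'
  have mS : m ∈ S := H.clos_mem hS hm.1 hg h2' m1 (by omega)
  have m3 : d h m = 2 := by
    apply H.two (x := h') (by rw [H.symm]; exact hm.2) m1
    rintro rfl
    omega
  rw [H.Fn2 hS hg mS m2 v, H.Fn2 hS hh mS m3 v]

lemma kappa (H : GData d b a2 c2 a3) : (a2 : ℝ) / (1 + b) = 1 + b - c2 := by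
  have := H.hb
  have b1 : 1 + b ≠ 0 := by intro h; linarith
  rw [div_eq_iff b1, H.rel]; ring

set_option maxHeartbeats 1000000 in
lemma core (H : GData d b a2 c2 a3) {x u z w : V} (hu : d x u = 3) (hz : d x z = 2)
    (hw : d x w = 2) (huz : d u z = 1) (hzw : d z w = 1) :
    ∃ w', d w w' = 1 ∧ d x w' = 3 ∧ ∀ v, d x v = 1 → d u v = 4 → d w' v = 4 := by
  have hb := H.hb
  have hzu : d z u = 1 := by rw [H.symm]; exact huz
  have hwz : d w z = 1 := by rw [H.symm]; exact hzw
  have huw : d u w = 2 := by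
    apply H.two hzu hzw
    rintro rfl
    omega
  have hq : b⁻¹ < 0 := by rw [inv_lt_zero]; linarith
  have hbq : b * b⁻¹ = 1 := mul_inv_cancel₀ (by intro h; linarith)
  have hq2 : 0 < (b⁻¹) ^ 2 := by nlinarith
  have hq3 : (b⁻¹) ^ 3 < 0 := by nlinarith
  have hκ := H.kappa
  have a2p : (0:ℝ) < a2 := by exact_mod_cast H.a2pos
  have c2p : (0:ℝ) < c2 := by exact_mod_cast H.c2pos
  obtain ⟨S, uS, wS, hS⟩ := H.exOm huw
  have zS : z ∈ S := H.clos_mem hS uS wS huw huz (by omega)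
  have xS : x ∉ S := by
    intro h
    have := hS.diam x h u uS
    omega
  -- no level one
  have lev1 : ∀ g ∈ S, 2 ≤ d x g := by
    intro q0 q0S
    by_contra hlt
    have n0 : ∀ g ∈ S, d x g ≠ 0 := by
      intro g gS h
      have := (H.zero _ _).1 h
      subst this
      exact xS gS
    have l1 : d x q0 = 1 := by have := n0 q0 q0S; omega
    have sq := H.symm x q0
    have uniq : ∀ g ∈ S, d x g = 1 → g = q0 := by
      intro g gS hg
      by_contra hne
      have h2 := H.two hg l1 hne
      exact xS (H.clos_mem hS gS q0S h2 (by rw [H.symm]; exact hg) (by omega))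
    have : ∃ g ∈ S, d x g = 2 ∧ d g q0 = 2 := by
      by_cases hzq : d z q0 = 1
      · refine ⟨w, wS, hw, ?_⟩
        have := hS.diam w wS q0 q0S
        have h0 : d w q0 ≠ 0 := by
          intro h
          have := (H.zero _ _).1 h
          subst this
          omega
        have h1 : d w q0 ≠ 1 := fun h => H.notri z w q0 hzw h hzq
        omega
      · refine ⟨z, zS, hz, ?_⟩
        have := hS.diam z zS q0 q0S
        have h0 : d z q0 ≠ 0 := by
          intro h
          have := (H.zero _ _).1 h
          subst this
          omega
        omega
    obtain ⟨g, gS, hg, hgq⟩ := this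
    have hqg : d q0 g = 2 := by rw [H.symm]; exact hgq
    have m := H.master hgq x
    rw [H.symm g x, H.symm q0 x, hg, l1, hκ] at m
    have e1 : ∑ r ∈ NA d q0 g, (b⁻¹) ^ d r x = a2 * (b⁻¹) ^ 2 := by
      rw [← H.ha q0 g hqg, ← nsmul_eq_mul, ← Finset.sum_const, NA]
      refine Finset.sum_congr rfl fun r hr => ?_
      simp only [mem_filter, mem_univ, true_and] at hr
      have rS : r ∈ S := H.clos_mem hS q0S gS hqg hr.1 (by omega)
      have := n0 r rS
      have h1 : d x r ≠ 1 := fun h => H.notri x q0 r l1 hr.1 h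
      have := H.tri x q0 r
      have : d r x = 2 := by rw [H.symm]; omega
      rw [this]
    have e2 : a2 * (b⁻¹) ^ 3 ≤ ∑ r ∈ NA d g q0, (b⁻¹) ^ d r x := by
      rw [← H.ha g q0 hgq, ← nsmul_eq_mul, ← Finset.sum_const, NA]
      refine Finset.sum_le_sum fun r hr => ?_
      simp only [mem_filter, mem_univ, true_and] at hr
      have rS : r ∈ S := H.clos_mem hS gS q0S hgq hr.1 (by omega)
      have := n0 r rS
      have h1 : d x r ≠ 1 := by
        intro h
        have := uniq r rS h
        subst this
        omega
      have := H.tri x g r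
      have : d r x = 2 ∨ d r x = 3 := by rw [H.symm]; omega
      rcases this with h | h <;> rw [h]
      linarith
    rw [e1] at m
    have hr := H.rel
    have i1 : (a2:ℝ) * (b⁻¹) ^ 3 - a2 * (b⁻¹)^2 ≤ (1 + b - c2) * ((b⁻¹)^2 - b⁻¹ ^ 1) := by linarith
    generalize b⁻¹ = q at *
    have i2 : (a2 * q - (1 + b - c2)) * (q * (q - 1)) ≤ 0 := by nlinarith
    have i3 : 0 < q * (q - 1) := by nlinarith
    have i4 : a2 * q - (1 + b - c2) ≤ 0 := by
      by_contra hcon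
      push Not at hcon
      have := mul_pos hcon i3
      linarith
    have i5 : a2 * q = (1 + b - c2) * (1 + q) := by
      rw [hr]; linear_combination (1 + b - c2) * hbq
    have i6 : (1 + b - c2) * q ≤ 0 := by nlinarith
    nlinarith
  have lev2 : ∀ g ∈ S, d x g = 2 ∨ d x g = 3 := by
    intro g gS
    have := lev1 g gS
    by_contra hcon
    have t1 := H.tri x z g
    have t2 := H.tri x w g
    have := hS.diam z zS g gS
    have := hS.diam w wS g gS
    have s1 := H.symm g w
    have s2 := H.symm g z
    have s3 := H.symm g x
    have s4 := H.symm w x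
    have s5 := H.symm z x
    have := (H.lem1 (x := g) (y := w) (w := x) (by omega) (by omega)).2 z hwz (by omega)
    omega
  have val : ∀ g ∈ S, (b⁻¹) ^ 3 ≤ (b⁻¹) ^ d g x ∧ (b⁻¹) ^ d g x ≤ (b⁻¹)^2 := by
    intro g gS
    rw [H.symm g x]
    rcases lev2 g gS with h | h <;> rw [h] <;> constructor <;> linarith
  -- existence of w'
  have Fzw := H.Fn_const hS zS wS x
  have Fuz := H.Fn_const hS uS zS x
  rw [Fn, Fn, H.symm z x, H.symm w x, hz, hw] at Fzw
  have cst : ∀ (g : V) (t : ℝ), g ∈ S → ∑ m ∈ S.filter (fun m => d g m = 1), t = (a2 + c2) * t := by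
    intro g t hg
    rw [Finset.sum_const, hS.deg g hg]
    simp
  have ex : ∃ w' ∈ S, d w w' = 1 ∧ d x w' = 3 := by
    by_contra hcon
    push Not at hcon
    have e1 : ∑ m ∈ S.filter (fun m => d w m = 1), (b⁻¹) ^ d m x = (a2 + c2) * (b⁻¹) ^ 2 := by
      rw [← cst w _ wS]
      refine Finset.sum_congr rfl fun r hr => ?_
      rw [mem_filter] at hr
      have := hcon r hr.1 hr.2
      have := lev2 r hr.1
      rw [H.symm r x]
      have h : d x r = 2 := by omega
      rw [h]
    have e2 : ∑ m ∈ S.filter (fun m => d z m = 1), (b⁻¹) ^ d m x < (a2 + c2) * (b⁻¹) ^ 2 := by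
      rw [← cst z _ zS]
      refine Finset.sum_lt_sum ?_ ⟨u, ?_, ?_⟩
      · intro r hr
        rw [mem_filter] at hr
        exact (val r hr.1).2
      · rw [mem_filter]; exact ⟨uS, hzu⟩
      · rw [H.symm u x, hu]; linarith
    linarith
  obtain ⟨w', w'S, hww, hxw⟩ := ex
  refine ⟨w', hww, hxw, ?_⟩
  intro v hv huv
  have hvu : d v u = 4 := by rw [H.symm]; exact huv
  have levv : ∀ g ∈ S, 3 ≤ d v g := by
    intro g gS
    by_contra hcon
    have := hS.diam u uS g gS
    have := H.tri u g v
    have sg := H.symm g v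
    have hug : d u g = 2 := by omega
    have l := (H.lem1 (x := u) (y := g) (w := v) hug (by omega)).1
    have e1 : ∑ m ∈ S.filter (fun m => d u m = 1), (b⁻¹) ^ d m x ≤
        a2 * (b⁻¹) ^ 3 + c2 * (b⁻¹) ^ 2 := by
      rw [H.clos hS uS gS hug, H.NB_eq hug, Finset.sum_union (NAC_disj _ _)]
      apply add_le_add
      · rw [← H.ha u g hug, ← nsmul_eq_mul, ← Finset.sum_const, NA]
        refine Finset.sum_le_sum fun r hr => ?_
        simp only [mem_filter, mem_univ, true_and] at hr
        have rS : r ∈ S := H.clos_mem hS uS gS hug hr.1 (by omega)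
        have h4 := l r hr.1 hr.2
        have := H.tri r x v
        have s := H.symm r x
        have := lev2 r rS
        have h3 : d r x = 3 := by omega
        rw [h3]
      · rw [← H.hc u g hug, ← nsmul_eq_mul, ← Finset.sum_const, NC]
        refine Finset.sum_le_sum fun r hr => ?_
        simp only [mem_filter, mem_univ, true_and] at hr
        have rS : r ∈ S := H.clos_mem hS uS gS hug hr.1 (by omega)
        exact (val r rS).2
    have e2 : (a2 + c2) * (b⁻¹) ^ 3 ≤ ∑ m ∈ S.filter (fun m => d z m = 1), (b⁻¹) ^ d m x := by
      rw [← cst z _ zS]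
      refine Finset.sum_le_sum fun r hr => ?_
      rw [mem_filter] at hr
      exact (val r hr.1).1
    rw [Fn, Fn, H.symm u x, H.symm z x, hu, hz, hκ] at Fuz
    have : (1 + b) * ((b⁻¹)^3 - (b⁻¹)^2) ≤ 0 := by nlinarith
    nlinarith
  by_contra hcon
  have lv : ∀ g ∈ S, (d x g = 2 ∧ d v g = 3) ∨ (d x g = 3 ∧ (d v g = 3 ∨ d v g = 4)) := by
    intro g gS
    have := lev2 g gS
    have := levv g gS
    have := H.tri v x g
    have := H.symm v x
    omega
  have F1 := H.Fn_const hS uS w'S x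
  have F2 := H.Fn_const hS uS w'S v
  have vw' : d v w' = 3 := by
    have := H.symm v w'
    have := lv w' w'S
    omega
  have key : ∑ m ∈ S.filter (fun m => d u m = 1), ((b⁻¹) ^ d m v - b⁻¹ * (b⁻¹) ^ d m x)
     = ∑ m ∈ S.filter (fun m => d w' m = 1), ((b⁻¹) ^ d m v - b⁻¹ * (b⁻¹) ^ d m x)
      - (1 + b - c2) * ((b⁻¹) ^ 3 - (b⁻¹) ^ 4) := by
    rw [Fn, Fn, H.symm u x, H.symm w' x, hu, hxw, hκ] at F1
    rw [Fn, Fn, H.symm w' v, huv, vw', hκ] at F2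
    rw [Finset.sum_sub_distrib, Finset.sum_sub_distrib, ← Finset.mul_sum, ← Finset.mul_sum]
    linear_combination F2 - b⁻¹ * F1
  have hq4 : 0 < (b⁻¹) ^ 4 := by nlinarith
  have psi : ∀ g ∈ S, (b⁻¹) ^ d g v - b⁻¹ * (b⁻¹) ^ d g x ≤ 0 := by
    intro g gS
    rw [H.symm g v, H.symm g x]
    rcases lv g gS with ⟨h1, h2⟩ | ⟨h1, h2 | h2⟩ <;> rw [h1, h2] <;> nlinarith
  have n1 : ∑ m ∈ S.filter (fun m => d w' m = 1), ((b⁻¹) ^ d m v - b⁻¹ * (b⁻¹) ^ d m x) ≤ 0 := by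
    apply Finset.sum_nonpos
    intro m hm
    rw [mem_filter] at hm
    exact psi m hm.1
  have n2 : ∑ m ∈ S.filter (fun m => d u m = 1), ((b⁻¹) ^ d m v - b⁻¹ * (b⁻¹) ^ d m x) < 0 := by
    rw [key]
    nlinarith
  obtain ⟨m, hm, hneg⟩ := Finset.exists_lt_of_sum_lt (s := S.filter (fun m => d u m = 1))
    (f := fun m => (b⁻¹) ^ d m v - b⁻¹ * (b⁻¹) ^ d m x) (g := fun _ => (0:ℝ)) (by simpa using n2)
  rw [mem_filter] at hm
  simp only [H.symm m v, H.symm m x] at hneg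
  rcases lv m hm.1 with ⟨h1, h2⟩ | ⟨h1, h2 | h2⟩
  · rw [h1, h2] at hneg; ring_nf at hneg; linarith
  · exact H.nopar (v := v) (x := x) (g := m) (u := u) (by rw [H.symm]; exact hv)
      (by rw [H.symm]; exact hm.2) hvu h2 h1 hu
  · rw [h1, h2] at hneg; ring_nf at hneg; linarith

end GData

lemma part0 (b α : ℝ) (A2 C2 A3 C3 C4 : ℕ) (hb0 : b ≠ 0) (hb1 : b ≠ -1)
    (h2 : (A2 : ℝ) = -(1 + b) ^ 2 * α) (hC2 : (C2 : ℝ) = (1 + b) * (1 + α))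
    (hA3 : (A3 : ℝ) = A2 * (1 + b + b ^ 2)) (hC3 : (C3 : ℝ) = (1 + b + b ^ 2) * (1 + α * (1 + b)))
    (hC4 : (C4 : ℝ) = (1 + b) * (1 + b ^ 2) * (1 + α * (1 + b + b ^ 2)))
    (p2 : 0 < A2) (q2 : 0 < C2) (q3 : 0 < C3) (q4 : 0 < C4) : b < -1 := by
  by_contra hcon
  have hB : 0 < 1 + b := by
    rcases lt_or_eq_of_le (not_lt.1 hcon) with h | h
    · linarith
    · exact (hb1 h.symm).elim
  have c4 : (0:ℝ) < C4 := by exact_mod_cast q4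
  have a2 : (1:ℝ) ≤ A2 := by exact_mod_cast p2
  have k1 : 0 < 1 + α * (1 + b + b ^ 2) := by
    rw [hC4] at c4
    exact (mul_pos_iff_of_pos_left (by positivity)).1 c4
  have k2 : (A2 : ℝ) * (1 + b + b ^ 2) < (1 + b) ^ 2 := by
    have := mul_pos (pow_pos hB 2) k1
    rw [h2]; linarith
  have g0 : 0 < 1 + b + b ^ 2 := by nlinarith [sq_nonneg (b + 1), sq_nonneg b]
  have bpos : 0 < b := by nlinarith
  have A1 : A2 = 1 := by
    by_contra hne
    have : (2:ℝ) ≤ A2 := by exact_mod_cast (by omega : 2 ≤ A2)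
    nlinarith
  subst A1
  have hα : (1 + b) ^ 2 * α = -1 := by push_cast at h2; linarith
  have e1 : (1 + b) ^ 2 = C2 * (1 + b) + 1 := by
    rw [hC2]; linear_combination -hα
  have e2 : (A3 : ℝ) = (C2 - 1) * (1 + b) + 2 := by
    rw [hA3]; push_cast; linear_combination e1
  by_cases hc : C2 = 1
  · subst hc
    push_cast at *
    have e3 : (C3 : ℝ) = 2 * (1 - b) := by
      have : α * (1 + b) = - b := by
        have h : (1 + b) * (α * (1 + b) + b) = 0 := by nlinarith
        rcases mul_eq_zero.1 h with h | h <;> linarith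
      rw [hC3, this]
      have : 1 + b + b ^ 2 = 2 := by linarith
      rw [this]; ring
    have : C3 < 2 := by
      have : (C3 : ℝ) < 2 := by linarith
      exact_mod_cast this
    have : C3 = 1 := by omega
    subst this
    push_cast at e3
    have : b = 1 / 2 := by linarith
    subst this
    norm_num at e1
  · have c : 2 ≤ C2 := by omega
    have c' : (2:ℝ) ≤ C2 := by exact_mod_cast c
    have l1 : (C2 : ℝ) < 1 + b := by
      by_contra hh
      have := mul_nonneg hB.le (sub_nonneg.2 (not_lt.1 hh))
      linarith
    have l2 : 0 < (1 + b - C2) * (C2 - 1) := mul_pos (by linarith) (by linarith)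
    have l2' : 0 < (1 + b - C2) * (2 + b - C2) := mul_pos (by linarith) (by linarith)
    have l3 : (C2 : ℝ) * (C2 - 1) < A3 - 2 := by linarith
    have l4 : (A3 : ℝ) - 2 < C2 * (C2 - 1) + 1 := by linarith
    have m1 : (C2 : ℤ) * (C2 - 1) < A3 - 2 := by exact_mod_cast l3
    have m2 : (A3 : ℤ) - 2 < C2 * (C2 - 1) + 1 := by exact_mod_cast l4
    omega

lemma gb_closed (b : ℝ) (hb : b ≠ 1) (i : ℕ) : gaussBracket b i = (b ^ i - 1) / (b - 1) := by
  rw [gaussBracket, geom_sum_eq hb]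

lemma recur_aux (b α β k : ℝ) (D : ℕ) (hb0 : b ≠ 0) (hb : b ≠ 1) (j : ℕ) :
    ∃ t : ℝ, ∃ r : ℕ → ℝ, ∀ (h : ℕ) (c a e : ℝ),
      c = gaussBracket b h * (1 + α * gaussBracket b (h - 1)) →
      e = (gaussBracket b D - gaussBracket b h) * (β - α * gaussBracket b h) →
      a = k - c - e →
      c * ((b⁻¹) ^ (h - 1)) ^ j + a * ((b⁻¹) ^ h) ^ j + e * ((b⁻¹) ^ (h + 1)) ^ j =
        t * ((b⁻¹) ^ h) ^ j + ∑ i ∈ Finset.range j, r i * ((b⁻¹) ^ h) ^ i := by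
  have hb' : b - 1 ≠ 0 := sub_ne_zero.2 hb
  set q := b⁻¹ with hq
  have hbq : b * q = 1 := mul_inv_cancel₀ hb0
  set n : ℝ := (b ^ j - 1) * (α * q / (b - 1) ^ 2) + (q ^ j - 1) * (α / (b - 1) ^ 2) with hn
  set m : ℝ := (b ^ j - 1) * ((1 / (b - 1)) * (1 - α / (b - 1)) - α * q / (b - 1) ^ 2)
    + (q ^ j - 1) * (-(β + α / (b - 1)) / (b - 1) - α * b ^ D / (b - 1) ^ 2) with hm
  set l : ℝ := k + (b ^ j - 1) * (-(1 / (b - 1)) * (1 - α / (b - 1)))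
    + (q ^ j - 1) * (b ^ D / (b - 1) * (β + α / (b - 1))) with hl
  refine ⟨l, fun i => (if i + 1 = j then m else 0) + (if i + 2 = j then n else 0), ?_⟩
  intro h c a e hc he ha
  have hT : b ^ h * q ^ h = 1 := by rw [← mul_pow, hbq, one_pow]
  have c1 : c = (b ^ h - 1) / (b - 1) * (1 + α * ((b ^ h * q - 1) / (b - 1))) := by
    rw [hc, gb_closed b hb, gb_closed b hb]
    rcases h with _ | h
    · simp
    · have : b ^ (h + 1) * q = b ^ h := by rw [pow_succ, mul_assoc, hbq, mul_one]
      rw [this]; simp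
  have e1 : e = (b ^ D - b ^ h) / (b - 1) * (β - α * ((b ^ h - 1) / (b - 1))) := by
    rw [he, gb_closed b hb, gb_closed b hb]
    ring
  have t1 : c * (q ^ (h - 1)) ^ j = c * b ^ j * (q ^ h) ^ j := by
    rcases h with _ | h
    · have : c = 0 := by rw [hc]; simp [gaussBracket]
      rw [this]; ring
    · rw [mul_assoc, ← mul_pow]
      congr 2
      rw [pow_succ, Nat.add_sub_cancel]
      linear_combination (- q ^ h) * hbq
  have t2 : (q ^ (h + 1)) ^ j = q ^ j * (q ^ h) ^ j := by
    rw [← mul_pow, pow_succ, mul_comm]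
  have co : k + (b ^ j - 1) * c + (q ^ j - 1) * e = l + m * b ^ h + n * (b ^ h) ^ 2 := by
    rw [c1, e1, hl, hm, hn]
    field_simp
    ring
  have lhs : c * (q ^ (h - 1)) ^ j + a * (q ^ h) ^ j + e * (q ^ (h + 1)) ^ j =
      (l + m * b ^ h + n * (b ^ h) ^ 2) * (q ^ h) ^ j := by
    rw [← co, t1, t2, ha]; ring
  rw [lhs]
  clear_value l
  rcases j with _ | _ | j
  · have hm0 : m = 0 := by rw [hm]; simp
    have hn0 : n = 0 := by rw [hn]; simp
    rw [hm0, hn0]; simp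
  · have hn0 : n = 0 := by
      rw [hn]; simp only [zero_add, pow_one]
      field_simp
      linear_combination α * hbq
    rw [hn0]
    simp only [Finset.sum_range_succ, Finset.sum_range_zero]
    simp
    linear_combination m * hT
  · rw [Finset.sum_range_succ, Finset.sum_range_succ, Finset.sum_eq_zero]
    · simp
      clear_value m n
      rw [pow_succ (q ^ h) (j + 1), pow_succ (q ^ h) j]
      linear_combination m * (q ^ h) ^ j * (q ^ h) * hT + n * (q ^ h) ^ j * (b ^ h * q ^ h + 1) * hT
    · intro i hi
      rw [Finset.mem_range] at hi
      simp only []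
      rw [if_neg (by omega), if_neg (by omega)]; simp

section GraphPart
variable {V : Type*} [Fintype V] {G : SimpleGraph V}

lemma exists_step (hconn : G.Connected) {x y : V} {n : ℕ} (h : G.dist x y = n + 1) :
    ∃ v, G.dist x v = 1 ∧ G.dist v y = n := by
  obtain ⟨W, hW⟩ := hconn.exists_walk_length_eq_dist x y
  cases W with
  | nil => rw [SimpleGraph.dist_self] at h; omega
  | cons hadj W' =>
    rename_i v
    have h1 : G.dist x v = 1 := SimpleGraph.dist_eq_one_iff_adj.2 hadj
    have h2 := SimpleGraph.dist_le W'
    rw [SimpleGraph.Walk.length_cons] at hW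
    have h3 := hconn.dist_triangle (u := x) (v := v) (w := y)
    exact ⟨v, h1, by omega⟩

lemma exists_pair (hconn : G.Connected) {D : ℕ} (hdiam : ∃ x y : V, G.dist x y = D) (h : ℕ)
    (hh : h ≤ D) : ∃ x y : V, G.dist x y = h := by
  induction hn : D - h generalizing h with
  | zero =>
    have : h = D := by omega
    rw [this]; exact hdiam
  | succ n ih =>
    obtain ⟨x, y, hxy⟩ := ih (h + 1) (by omega) (by omega)
    obtain ⟨v, _, hv⟩ := exists_step hconn hxy
    exact ⟨v, y, hv⟩

variable {D : ℕ} {p : ℕ → ℕ → ℕ → ℕ}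

lemma cnt (hle : ∀ x y : V, G.dist x y ≤ D) (hdr : G.IsDistRegularWith D p) (x y : V) (i j : ℕ)
    (hi : i ≤ D) (hj : j ≤ D) :
    (Finset.univ.filter (fun z => G.dist x z = i ∧ G.dist y z = j)).card = p (G.dist x y) i j := by
  rw [← hdr (G.dist x y) i j (hle x y) hi hj x y rfl, ← Set.ncard_coe_finset]
  congr 1
  ext z; simp

lemma cnt_up (hle : ∀ x y : V, G.dist x y ≤ D) (hdr : G.IsDistRegularWith D p) (hD : 1 ≤ D)
    (hpD : p D 1 (D + 1) = 0) (x y : V) :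
    (Finset.univ.filter (fun z => G.dist x z = 1 ∧ G.dist y z = G.dist x y + 1)).card
      = p (G.dist x y) 1 (G.dist x y + 1) := by
  have := hle x y
  by_cases h : G.dist x y = D
  · rw [h, hpD, Finset.card_eq_zero, Finset.filter_eq_empty_iff]
    intro z _
    have := hle y z
    omega
  · exact cnt hle hdr x y 1 _ hD (by omega)

lemma mulG (hconn : G.Connected) (hle : ∀ x y : V, G.dist x y ≤ D)
    (hdr : G.IsDistRegularWith D p) (hD : 1 ≤ D)
    (hpD : p D 1 (D + 1) = 0) (f : ℕ → ℝ) (x y : V) :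
    ∑ z, (if G.dist x z = 1 then (1:ℝ) else 0) * f (G.dist z y) =
      p (G.dist x y) 1 (G.dist x y - 1) * f (G.dist x y - 1)
      + p (G.dist x y) 1 (G.dist x y) * f (G.dist x y)
      + p (G.dist x y) 1 (G.dist x y + 1) * f (G.dist x y + 1) := by
  have hl := hle x y
  rw [← cnt hle hdr x y 1 (G.dist x y - 1) hD (by omega), ← cnt hle hdr x y 1 (G.dist x y) hD hl,
    ← cnt_up hle hdr hD hpD, Finset.card_filter, Finset.card_filter, Finset.card_filter]
  push_cast
  rw [Finset.sum_mul, Finset.sum_mul, Finset.sum_mul, ← Finset.sum_add_distrib,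
    ← Finset.sum_add_distrib]
  refine Finset.sum_congr rfl fun z _ => ?_
  by_cases h1 : G.dist x z = 1
  · have t1 := hconn.dist_triangle (u := x) (v := z) (w := y)
    have t2 := hconn.dist_triangle (u := z) (v := x) (w := y)
    have s1 := G.dist_comm (u := x) (v := z)
    have s2 := G.dist_comm (u := z) (v := y)
    by_cases h0 : G.dist x y = 0
    · have := (hconn.dist_eq_zero_iff).1 h0
      subst this
      simp [h1, ← s1]
    · have : G.dist y z = G.dist x y - 1 ∨ G.dist y z = G.dist x y ∨
        G.dist y z = G.dist x y + 1 := by omega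
      rw [s2]
      rcases this with h | h | h
      · rw [if_pos h1, if_pos ⟨h1, h⟩, if_neg (by omega), if_neg (by omega), h]; ring
      · rw [if_pos h1, if_neg (by omega), if_pos ⟨h1, h⟩, if_neg (by omega), h]; ring
      · rw [if_pos h1, if_neg (by omega), if_neg (by omega), if_pos ⟨h1, h⟩, h]; ring
  · simp [h1]

lemma ksum (hconn : G.Connected) (hle : ∀ x y : V, G.dist x y ≤ D)
    (hdiam : ∃ x y : V, G.dist x y = D)
    (hdr : G.IsDistRegularWith D p) (hD : 1 ≤ D)
    (hpD : p D 1 (D + 1) = 0) (h : ℕ) (hh : h ≤ D) :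
    (p h 1 h : ℝ) = p 0 1 1 - p h 1 (h - 1) - p h 1 (h + 1) := by
  obtain ⟨x, y, hxy⟩ := exists_pair hconn hdiam h hh
  have m := mulG hconn hle hdr hD hpD (fun _ => 1) x y
  have c := cnt hle hdr x x 1 1 hD hD
  rw [Finset.card_filter] at c
  have c' : (∑ z : V, if G.dist x z = 1 then (1:ℝ) else 0) = (p 0 1 1 : ℝ) := by
    rw [SimpleGraph.dist_self] at c
    simp only [and_self] at c
    rw [← c]; push_cast; rfl
  simp only [mul_one] at m
  rw [c', hxy] at m
  linarith

lemma cposG (hconn : G.Connected) (hle : ∀ x y : V, G.dist x y ≤ D)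
    (hdiam : ∃ x y : V, G.dist x y = D)
    (hdr : G.IsDistRegularWith D p) (hD : 1 ≤ D) (h : ℕ) (h1 : 1 ≤ h) (hh : h ≤ D) :
    0 < p h 1 (h - 1) := by
  obtain ⟨x, y, hxy⟩ := exists_pair hconn hdiam h hh
  have c := cnt hle hdr x y 1 (h - 1) hD (by omega)
  rw [hxy] at c
  rw [← c, Finset.card_pos]
  obtain ⟨v, hv, hv'⟩ := exists_step hconn (x := x) (y := y) (n := h - 1) (by omega)
  exact ⟨v, by rw [Finset.mem_filter, G.dist_comm (u := y)]; exact ⟨Finset.mem_univ _, hv, hv'⟩⟩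

lemma mkG (hconn : G.Connected) (hD : 4 ≤ D) (hle : ∀ x y : V, G.dist x y ≤ D)
    (hdiam : ∃ x y : V, G.dist x y = D)
    (hdr : G.IsDistRegularWith D p)
    (b α β : ℝ) (hcp : HasClassicalParams D p b α β)
    (ha1 : p 1 1 1 = 0) (ha2 : p 2 1 2 ≠ 0) :
    GData (fun x y => G.dist x y) b (p 2 1 2) (p 2 1 1) (p 3 1 3) := by
  classical
  obtain ⟨hb0, hb1, hc, he⟩ := hcp
  have hD1 : 1 ≤ D := by omega
  have hpD : p D 1 (D + 1) = 0 := by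
    have := he D le_rfl
    rw [sub_self, zero_mul] at this
    exact_mod_cast this
  have ks := ksum hconn hle hdiam hdr hD1 hpD
  have cp := cposG hconn hle hdiam hdr hD1
  have g1 : gaussBracket b 1 = 1 := by simp [gaussBracket]
  have g0 : gaussBracket b 0 = 0 := by simp [gaussBracket]
  have g2 : gaussBracket b 2 = 1 + b := by simp [gaussBracket, Finset.sum_range_succ]
  have g3 : gaussBracket b 3 = 1 + b + b ^ 2 := by simp [gaussBracket, Finset.sum_range_succ]
  have g4 : gaussBracket b 4 = 1 + b + b ^ 2 + b ^ 3 := by simp [gaussBracket, Finset.sum_range_succ]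
  have e0 := he 0 (by omega)
  have e1 := he 1 (by omega)
  have e2 := he 2 (by omega)
  have e3 := he 3 (by omega)
  have c1 := hc 1 (by omega)
  have c2 := hc 2 (by omega)
  have c3 := hc 3 (by omega)
  have c4 := hc 4 (by omega)
  have k1 := ks 1 (by omega)
  have k2 := ks 2 (by omega)
  have k3 := ks 3 (by omega)
  norm_num [g0, g1, g2, g3, g4] at e0 e1 e2 e3 c1 c2 c3 c4 k1 k2 k3
  rw [ha1, e0, e1, c1] at k1
  rw [e0, e2, c2] at k2
  rw [e0, e3, c3] at k3
  have hβ : β = 1 - α * (gaussBracket b D - 1) := by push_cast at k1; linarith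
  have k2' : (p 2 1 2 : ℝ) = -(1 + b) ^ 2 * α := by rw [k2, hβ]; ring
  have k3' : (p 3 1 3 : ℝ) = (p 2 1 2 : ℝ) * (1 + b + b ^ 2) := by rw [k3, k2', hβ]; ring
  have hb : b < -1 := by
    refine part0 b α (p 2 1 2) (p 2 1 1) (p 3 1 3) (p 3 1 2) (p 4 1 3) hb0 hb1 k2' c2 k3' c3 ?_
      (Nat.pos_of_ne_zero ha2) (cp 2 (by omega) (by omega)) (cp 3 (by omega) (by omega))
      (cp 4 (by omega) (by omega))
    rw [c4]; ring
  have hbne : b ≠ 1 := by intro h; linarith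
  choose θ r hr using recur_aux b α β (p 0 1 1 : ℝ) D hb0 hbne
  have spec : SpecData (fun x y => G.dist x y) D b⁻¹ (fun h => (p h 1 (h - 1) : ℝ))
      (fun h => (p h 1 h : ℝ)) (fun h => (p h 1 (h + 1) : ℝ)) θ := by
    refine ⟨fun x y => G.dist_comm, fun x y => hconn.dist_eq_zero_iff, hle, hdiam, ?_, ?_, ?_, ?_, ?_⟩
    · intro h h1 h2
      exact_mod_cast cp h h1 h2
    · have := hc 0 (by omega)
      rw [g0, zero_mul] at this
      exact this
    · exact mulG hconn hle hdr hD1 hpD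
    · intro h h' hh hh' heq
      have e : |b⁻¹| ^ h = |b⁻¹| ^ h' := by rw [← abs_pow, ← abs_pow, heq]
      refine pow_right_injective₀ (a := |b⁻¹|) (by rw [abs_pos]; exact inv_ne_zero hb0) ?_ e
      rw [abs_inv, abs_of_neg (by linarith)]
      intro h
      rw [inv_eq_one] at h
      linarith
    · intro j
      refine ⟨r j, fun h hh => hr j h _ _ _ (hc h hh) (he h hh) (ks h hh)⟩
  have mk : ∀ i j h, i ≤ D → j ≤ D → ∀ x y, G.dist x y = h →
      (Finset.univ.filter (fun z => G.dist x z = i ∧ G.dist y z = j)).card = p h i j := by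
    intro i j h hi hj x y hxy
    rw [cnt hle hdr x y i j hi hj, hxy]
  refine ⟨fun x y => G.dist_comm, fun x y => hconn.dist_eq_zero_iff,
    fun x y z => hconn.dist_triangle, ?_, ?_, ?_, ?_, Nat.pos_of_ne_zero ha2,
    cp 2 (by omega) (by omega), hb, ?_, ?_⟩
  · intro x y z h1 h2 h3
    have := mk 1 1 1 hD1 hD1 x y h1
    rw [ha1, Finset.card_eq_zero, Finset.filter_eq_empty_iff] at this
    exact this (Finset.mem_univ z) ⟨h3, h2⟩
  · exact mk 1 1 2 hD1 hD1
  · exact mk 1 2 2 hD1 (by omega)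
  · exact mk 1 3 3 hD1 (by omega)
  · rw [k2', c2]; ring
  · intro j
    exact spec.balanced j

end GraphPart

/-- Classical parameters `(D, b, α, β)`, `D ≥ 4`, `a₁ = 0`, `a₂ ≠ 0`,
`∂(x,y) = 3`, `Δ = [x, C]`. If `z, u ∈ Δ` and `s t u z w` is a pentagon with
`z, w ∈ Γ₂(x)` and `u ∈ Γ₃(x)`, then `w ∈ Δ`. -/
theorem pentagon_mem_Delta [Fintype V] (G : SimpleGraph V) (hconn : G.Connected)
    (D : ℕ) (hD : 4 ≤ D)
    (hdiam_le : ∀ x y : V, G.dist x y ≤ D) (hdiam : ∃ x y : V, G.dist x y = D)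
    (p : ℕ → ℕ → ℕ → ℕ) (hdr : G.IsDistRegularWith D p)
    (b α β : ℝ) (hcp : HasClassicalParams D p b α β)
    (ha1 : p 1 1 1 = 0) (ha2 : p 2 1 2 ≠ 0)
    (x y : V) (hxy : G.dist x y = 3)
    (s t u z w : V) (hzΔ : z ∈ Delta G x y) (huΔ : u ∈ Delta G x y)
    (hst : G.dist s t = 1) (htu : G.dist t u = 1) (huz : G.dist u z = 1)
    (hzw : G.dist z w = 1) (hws : G.dist w s = 1)
    (hz : G.dist x z = 2) (hw : G.dist x w = 2) (hu : G.dist x u = 3) :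
    w ∈ Delta G x y := by
  classical
  have H := mkG hconn hD hdiam_le hdiam hdr b α β hcp ha1 ha2
  obtain ⟨w', h1, h2, h3⟩ := H.core hu hz hw huz hzw
  obtain ⟨u', ⟨hu1, hu2⟩, hu3⟩ := huΔ
  have huu : u = u' := hconn.dist_eq_zero_iff.1 (by omega)
  subst huu
  refine ⟨w', ⟨h2, ?_⟩, by rw [hw, h1, h2]⟩
  rw [← hu2]
  symm
  have n1 := hdr 3 1 4 (by omega) (by omega) hD x u hu
  have n2 := hdr 3 1 4 (by omega) (by omega) hD x w' h2
  rw [Bset, Bset, hu, h2]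
  refine Set.eq_of_subset_of_ncard_le ?_ (by rw [n1, n2]) (Set.toFinite _)
  rintro v ⟨hv1, hv2⟩
  exact ⟨hv1, h3 v hv1 hv2⟩
end

section
/- Let Γ be a distance-regular graph with classical parameters (D, b, α, β), D ≥ 4, and intersection numbers a₁ = 0 and a₂ ≠ 0. Fix vertices x, y with ∂(x,y) = 3, set C = {z ∈ Γ₃(x) : B(x,z) = B(x,y)} and Δ = [x,C] = {v ∈ X : ∃ z ∈ C with ∂(x,v)+∂(v,z)=∂(x,z)}. Then Δ is weak-geodetically closed with respect to x: for all z ∈ Δ and all vertices v with ∂(x,v)+∂(v,z) ≤ ∂(x,z)+1, one has v ∈ Δ. -/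
/-!
Common definitions: distance-regular graphs (via an intersection-number function `p`),
classical parameters, and the sets `B(x,y)`, `A(x,y)`, `C(x,y)`.
The distance `∂` is `SimpleGraph.dist`.
-/

variable {V : Type*}

namespace CP
/-- bracket as a function of `u = b^i` -/
noncomputable def br (b u : ℝ) : ℝ := (u - 1) / (b - 1)
noncomputable def cf (b α : ℝ) (u : ℝ) : ℝ := br b u * (1 + α * br b (u / b))
noncomputable def bf (b α d : ℝ) (u : ℝ) : ℝ := (d - br b u) * (1 + α - α * d - α * br b u)
noncomputable def kf (α d : ℝ) : ℝ := d * (1 + α - α * d)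
noncomputable def af (b α d : ℝ) (u : ℝ) : ℝ := kf α d - cf b α u - bf b α d u

noncomputable def Bop (b α d : ℝ) (g : ℤ → ℝ) (i : ℤ) : ℝ :=
  cf b α (b ^ i) * g (i - 1) + af b α d (b ^ i) * g i + bf b α d (b ^ i) * g (i + 1)
noncomputable def Top (b : ℝ) (g : ℤ → ℝ) (i : ℤ) : ℝ := (b ^ i)⁻¹ * g i

noncomputable def et (b α d : ℝ) : ℝ :=
  ((kf α d - 1) * ((1 + b) * (1 + α)) * (1 - 1 / b ^ 2) + kf α d * (1 - b ^ 2)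
    - kf α d * (1 - 1 / b ^ 2)) / (b - 1)
noncomputable def rh (b α d : ℝ) : ℝ := kf α d * (1 - 1 / b ^ 2) - et b α d
noncomputable def om (b α : ℝ) : ℝ := - α * (b + 1) ^ 2 / b ^ 2
noncomputable def ga (b α : ℝ) : ℝ := α * (b + 1) / b
noncomputable def bt (b : ℝ) : ℝ := b + 1 / b

lemma af_eq (b α d u : ℝ) (hb : b ≠ 0) (hb1 : b ≠ 1) :
    af b α d u = α * (b + 1) / (b * (b - 1) ^ 2) * (u - 1) * (b - u) := by
  have : b - 1 ≠ 0 := sub_ne_zero.mpr hb1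
  unfold af kf cf bf br; field_simp; ring

lemma E1 (b α d u : ℝ) (hb : b ≠ 0) (hb1 : b ≠ 1) (hu : u ≠ 0) :
    (af b α d u + af b α d (u * b)) * (u⁻¹ + (u * b)⁻¹)
      - bt b * (af b α d u * u⁻¹ + af b α d (u * b) * (u * b)⁻¹)
      - ga b α * (u⁻¹ + (u * b)⁻¹) = om b α := by
  have : b - 1 ≠ 0 := sub_ne_zero.mpr hb1
  rw [af_eq _ _ _ _ hb hb1, af_eq _ _ _ _ hb hb1]; unfold bt ga om; field_simp; ring

lemma E0 (b α d u : ℝ) (hb : b ≠ 0) (hb1 : b ≠ 1) (hu : u ≠ 0) :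
    2 * (bf b α d u * cf b α (u * b) + af b α d u ^ 2 + cf b α u * bf b α d (u / b)) * u⁻¹
      - bt b * (bf b α d u * cf b α (u * b) * (u * b)⁻¹ + af b α d u ^ 2 * u⁻¹
          + cf b α u * bf b α d (u / b) * (u / b)⁻¹)
      - ga b α * (2 * af b α d u * u⁻¹) - rh b α d * u⁻¹ = om b α * af b α d u + et b α d := by
  have : b - 1 ≠ 0 := sub_ne_zero.mpr hb1
  rw [af_eq _ _ _ _ hb hb1]; unfold bt ga om rh et kf cf bf br; field_simp; ring

lemma EN (b α d u : ℝ) (hb : b ≠ 0) (hb1 : b ≠ 1) (hu : u ≠ 0) :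
    cf b α u * (u / b)⁻¹ + af b α d u * u⁻¹ + bf b α d u * (u * b)⁻¹ =
      (kf α d / b - (b + 1) / b) * u⁻¹ + (b + 1) / b := by
  have : b - 1 ≠ 0 := sub_ne_zero.mpr hb1
  unfold af kf cf bf br; field_simp; ring

lemma opEq (b α d : ℝ) (hb : b ≠ 0) (hb1 : b ≠ 1) (g : ℤ → ℝ) (i : ℤ) :
    Bop b α d (Bop b α d (Top b g)) i - bt b * Bop b α d (Top b (Bop b α d g)) i
      + Top b (Bop b α d (Bop b α d g)) i
      - ga b α * (Bop b α d (Top b g) i + Top b (Bop b α d g) i) - rh b α d * Top b g i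
      = om b α * Bop b α d g i + et b α d * g i := by
  have hu : b ^ i ≠ 0 := zpow_ne_zero _ hb
  have h0 := E0 b α d (b ^ i) hb hb1 hu
  have h1 := E1 b α d (b ^ i) hb hb1 hu
  have h2 := E1 b α d (b ^ i / b) hb hb1 (div_ne_zero hu hb)
  have e1 : b ^ (i + 1) = b ^ i * b := zpow_add_one₀ hb i
  have e2 : b ^ (i - 1) = b ^ i / b := by rw [zpow_sub_one₀ hb]; rfl
  have e3 : b ^ (i + 1 + 1) = b ^ i * b * b := by rw [zpow_add_one₀ hb, e1]
  have e4 : b ^ (i - 1 - 1) = b ^ i / b / b := by rw [zpow_sub_one₀ hb, e2]; rfl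
  simp only [Bop, Top, add_sub_cancel_right, sub_add_cancel, e1, e2, e3, e4]
  rw [div_mul_cancel₀ _ hb] at h2
  generalize b ^ i = u at *
  have f1 : (u * b * b)⁻¹ - bt b * (u * b)⁻¹ + u⁻¹ = 0 := by unfold bt; field_simp; ring
  have f2 : (u / b / b)⁻¹ - bt b * (u / b)⁻¹ + u⁻¹ = 0 := by unfold bt; field_simp; ring
  generalize (u * b * b)⁻¹ = t2 at *
  generalize (u * b)⁻¹ = t1 at *
  generalize (u / b / b)⁻¹ = s2 at *
  generalize (u / b)⁻¹ = s1 at *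
  linear_combination g i * h0 + bf b α d u * g (i + 1) * h1 + cf b α u * g (i - 1) * h2
    + bf b α d u * bf b α d (u * b) * g (i + 1 + 1) * f1
    + cf b α u * cf b α (u / b) * g (i - 1 - 1) * f2

lemma opN (b α d : ℝ) (hb : b ≠ 0) (hb1 : b ≠ 1) (i : ℤ) :
    Bop b α d (fun j => (b ^ j)⁻¹) i =
      (kf α d / b - (b + 1) / b) * (b ^ i)⁻¹ + (b + 1) / b := by
  have hu : b ^ i ≠ 0 := zpow_ne_zero _ hb
  have e1 : b ^ (i + 1) = b ^ i * b := zpow_add_one₀ hb i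
  have e2 : b ^ (i - 1) = b ^ i / b := by rw [zpow_sub_one₀ hb]; rfl
  simp only [Bop, e1, e2]
  exact EN b α d _ hb hb1 hu
end CP
set_option linter.unusedSectionVars false
namespace CP
open Matrix
section psi
variable {V : Type*} [Fintype V] [DecidableEq V]

noncomputable def Phi (A : Matrix V V ℝ) (t g r : ℝ) : Matrix V V ℝ →ₗ[ℝ] Matrix V V ℝ where
  toFun X := A * (A * X) - t • (A * (X * A)) + X * A * A - g • (A * X + X * A) - r • X
  map_add' X Y := by
    simp only [Matrix.mul_add, Matrix.add_mul, smul_add]; abel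
  map_smul' c X := by
    simp only [Matrix.mul_smul, Matrix.smul_mul, smul_sub, smul_add, RingHom.id_apply]
    simp only [smul_comm t c, smul_comm g c, smul_comm r c]

noncomputable def Psi (A : Matrix V V ℝ) (t g r : ℝ) : Matrix V V ℝ →ₗ[ℝ] Matrix V V ℝ where
  toFun X := A * Phi A t g r X - Phi A t g r X * A
  map_add' X Y := by
    simp only [map_add, Matrix.mul_add, Matrix.add_mul]; abel
  map_smul' c X := by
    simp only [map_smul, Matrix.mul_smul, Matrix.smul_mul, smul_sub, RingHom.id_apply]

lemma Phi_apply (A : Matrix V V ℝ) (t g r : ℝ) (X) : Phi A t g r X =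
    A * (A * X) - t • (A * (X * A)) + X * A * A - g • (A * X + X * A) - r • X := rfl
lemma Psi_apply (A : Matrix V V ℝ) (t g r : ℝ) (X) : Psi A t g r X =
    A * Phi A t g r X - Phi A t g r X * A := rfl

lemma Psi_one (A : Matrix V V ℝ) (t g r : ℝ) : Psi A t g r 1 = 0 := by
  rw [Psi_apply, Phi_apply]
  simp only [Matrix.mul_one, Matrix.one_mul, Matrix.mul_add, Matrix.mul_sub, Matrix.add_mul,
    Matrix.sub_mul, Matrix.mul_smul, Matrix.smul_mul, Matrix.mul_assoc]
  abel

lemma tr_rot (P Q R : Matrix V V ℝ) : (P * Q * R).trace = (Q * (R * P)).trace := by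
  rw [Matrix.mul_assoc, Matrix.trace_mul_comm, Matrix.mul_assoc]

lemma Phi_adj (A : Matrix V V ℝ) (hA : Aᵀ = A) (t g r : ℝ) (X Y : Matrix V V ℝ) :
    ((Phi A t g r X)ᵀ * Y).trace = (Xᵀ * Phi A t g r Y).trace := by
  simp only [Phi_apply, transpose_sub, transpose_add, transpose_smul, transpose_mul, hA,
    Matrix.mul_add, Matrix.mul_sub, Matrix.add_mul,
    Matrix.sub_mul, Matrix.mul_smul, Matrix.smul_mul, trace_add, trace_sub, trace_smul]
  have h1 : (Xᵀ * A * A * Y).trace = (Xᵀ * (A * (A * Y))).trace := by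
    simp only [Matrix.mul_assoc]
  have h2 : (A * Xᵀ * A * Y).trace = (Xᵀ * (A * (Y * A))).trace := by
    rw [show A * Xᵀ * A * Y = A * (Xᵀ * (A * Y)) by simp only [Matrix.mul_assoc],
      Matrix.trace_mul_comm]; simp only [Matrix.mul_assoc]
  have h3 : (A * (A * Xᵀ) * Y).trace = (Xᵀ * (Y * A * A)).trace := by
    rw [show A * (A * Xᵀ) * Y = (A * A) * (Xᵀ * Y) by simp only [Matrix.mul_assoc],
      Matrix.trace_mul_comm]; simp only [Matrix.mul_assoc]
  have h4 : (Xᵀ * A * Y).trace = (Xᵀ * (A * Y)).trace := by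
    simp only [Matrix.mul_assoc]
  have h5 : (A * Xᵀ * Y).trace = (Xᵀ * (Y * A)).trace := tr_rot _ _ _
  rw [h1, h2, h3, h4, h5]

lemma Psi_adj (A : Matrix V V ℝ) (hA : Aᵀ = A) (t g r : ℝ) (X Y : Matrix V V ℝ) :
    ((Psi A t g r X)ᵀ * Y).trace = (Xᵀ * Psi A t g r Y).trace := by
  have hc : Phi A t g r (A * Y - Y * A) = Psi A t g r Y := by
    simp only [Psi_apply, Phi_apply, Matrix.mul_add, Matrix.mul_sub, Matrix.add_mul,
    Matrix.sub_mul, Matrix.mul_smul, Matrix.smul_mul, Matrix.mul_assoc]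
    simp only [smul_add, smul_sub]
    abel
  rw [← hc, ← Phi_adj A hA, Psi_apply]
  simp only [transpose_sub, transpose_mul, hA, Matrix.sub_mul, Matrix.mul_sub, trace_sub]
  rw [Matrix.mul_assoc, tr_rot]

end psi

section rg
variable {V : Type*} [Fintype V] [DecidableEq V]

noncomputable def Am (G : SimpleGraph V) : Matrix V V ℝ :=
  fun u v => if G.dist u v = 1 then 1 else 0
noncomputable def Nf (G : SimpleGraph V) (b : ℝ) (u v : V) : ℝ := (b ^ (G.dist u v : ℤ))⁻¹
noncomputable def rad (G : SimpleGraph V) (w : V) (g : ℤ → ℝ) : V → ℝ := fun v => g (G.dist w v)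

structure RG (G : SimpleGraph V) (b α d : ℝ) : Prop where
  hb0 : b ≠ 0
  hb1 : b ≠ 1
  radA : ∀ (w : V) (g : ℤ → ℝ), Am G *ᵥ rad G w g = rad G w (Bop b α d g)
  n2 : ∃ κ ξ : ℝ, ∀ w w', ∑ x, Nf G b x w * Nf G b x w' = κ * Nf G b w w' + ξ
  conn : G.Connected

lemma Am_symm (G : SimpleGraph V) : (Am G)ᵀ = Am G := by
  ext u v; simp only [Am, transpose_apply]; rw [G.dist_comm]

variable {G : SimpleGraph V} {b α d : ℝ}

lemma RG.phi_rad (h : RG G b α d) (w : V) (g : ℤ → ℝ) :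
    Phi (Am G) (bt b) (ga b α) (rh b α d) (diagonal (Nf G b w)) *ᵥ rad G w g =
      rad G w (fun i => om b α * Bop b α d g i + et b α d * g i) := by
  have hT : ∀ g, diagonal (Nf G b w) *ᵥ rad G w g = rad G w (Top b g) := by
    intro g; ext v; simp [mulVec_diagonal, Nf, rad, Top]
  simp only [Phi_apply, Matrix.sub_mulVec, Matrix.add_mulVec, Matrix.smul_mulVec,
    ← Matrix.mulVec_mulVec, h.radA, hT]
  ext v
  simp only [Pi.sub_apply, Pi.add_apply, Pi.smul_apply, smul_eq_mul, rad]
  exact opEq b α d h.hb0 h.hb1 g _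

lemma RG.psi_rad (h : RG G b α d) (w : V) (g : ℤ → ℝ) :
    Psi (Am G) (bt b) (ga b α) (rh b α d) (diagonal (Nf G b w)) *ᵥ rad G w g = 0 := by
  rw [Psi_apply, Matrix.sub_mulVec, ← Matrix.mulVec_mulVec, ← Matrix.mulVec_mulVec, h.phi_rad,
    h.radA, h.radA, h.phi_rad, sub_eq_zero]
  congr 1
  ext i; simp only [Bop]; ring

lemma RG.psi_zero (h : RG G b α d) (w : V) (t g' r : ℝ) (X : Matrix V V ℝ)
    (hX : ∀ g, X *ᵥ rad G w g = 0) (g : ℤ → ℝ) :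
    Psi (Am G) t g' r X *ᵥ rad G w g = 0 := by
  simp only [Psi_apply, Phi_apply, Matrix.sub_mulVec, Matrix.add_mulVec, Matrix.smul_mulVec,
    ← Matrix.mulVec_mulVec, h.radA, hX, Matrix.mulVec_zero, smul_zero, sub_zero, add_zero]

lemma RG.psipsi (h : RG G b α d) (w : V) :
    Psi (Am G) (bt b) (ga b α) (rh b α d)
     (Psi (Am G) (bt b) (ga b α) (rh b α d) (diagonal (Nf G b w))) w w = 0 := by
  have h1 := h.psi_zero w (bt b) (ga b α) (rh b α d) _ (h.psi_rad w)
    (fun i => if i = 0 then 1 else 0)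
  have h2 : rad G w (fun i => if i = 0 then 1 else 0) = Pi.single w 1 := by
    ext v
    by_cases hv : v = w
    · subst hv; simp [rad]
    · have : G.dist w v ≠ 0 := by
        rw [Ne, h.conn.dist_eq_zero_iff]; exact fun e => hv e.symm
      simp [rad, this, Pi.single_apply, hv]
  rw [h2, Matrix.mulVec_single_one] at h1
  exact congrFun h1 w

lemma diag_sum (f : V → ℝ) : diagonal f = ∑ v, f v • Matrix.single v v (1 : ℝ) := by
  ext i j
  simp only [diagonal_apply, Matrix.sum_apply, Matrix.smul_apply, Matrix.single_apply, smul_eq_mul]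
  by_cases hij : i = j
  · subst hij; simp
  · simp only [hij, if_false]
    symm; apply Finset.sum_eq_zero
    intro v _
    rw [if_neg]; · simp
    rintro ⟨rfl, rfl⟩; exact hij rfl

theorem RG.td (h : RG G b α d) (x : V) :
    Psi (Am G) (bt b) (ga b α) (rh b α d) (diagonal (Nf G b x)) = 0 := by
  set P := Psi (Am G) (bt b) (ga b α) (rh b α d) with hP
  obtain ⟨κ, ξ, hn⟩ := h.n2
  have key : ∑ x, ((P (diagonal (Nf G b x)))ᵀ * P (diagonal (Nf G b x))).trace = 0 := by
    have e : ∀ x, ((P (diagonal (Nf G b x)))ᵀ * P (diagonal (Nf G b x))).trace =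
        ∑ w, ∑ v, (Nf G b x w * Nf G b x v) * P (P (Matrix.single v v 1)) w w := by
      intro x
      rw [hP, Psi_adj _ (Am_symm G), ← hP, diagonal_transpose]
      simp only [Matrix.trace, Matrix.diag_apply, Matrix.diagonal_mul]
      refine Finset.sum_congr rfl fun w _ => ?_
      conv_lhs => rw [diag_sum (Nf G b x)]
      simp only [map_sum, map_smul, Matrix.sum_apply, Matrix.smul_apply, smul_eq_mul,
        Finset.mul_sum, mul_assoc]
    simp only [e]
    rw [Finset.sum_comm]
    apply Finset.sum_eq_zero
    intro w _
    rw [Finset.sum_comm]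
    simp only [← Finset.sum_mul, hn, add_mul, Finset.sum_add_distrib]
    have e1 : ∑ v, Nf G b w v * P (P (Matrix.single v v 1)) w w = 0 := by
      rw [← h.psipsi w, ← hP]
      conv_rhs => rw [diag_sum (Nf G b w)]
      simp only [map_sum, map_smul, Matrix.sum_apply, Matrix.smul_apply, smul_eq_mul]
    have e2 : ∑ v, P (P (Matrix.single v v 1)) w w = 0 := by
      have : ∑ v, P (P (Matrix.single v v 1)) = P (P 1) := by
        rw [← Matrix.diagonal_one, diag_sum]
        simp only [one_smul, map_sum]
      rw [← Matrix.sum_apply, this, hP, Psi_one, map_zero]; rfl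
    simp only [mul_assoc, ← Finset.mul_sum]
    rw [e1, e2]; simp
  have hnn : ∀ M : Matrix V V ℝ, (Mᵀ * M).trace = ∑ i, ∑ j, M j i ^ 2 := by
    intro M
    simp [Matrix.trace, Matrix.mul_apply, sq]
  simp only [hnn] at key
  have k1 := (Finset.sum_eq_zero_iff_of_nonneg (fun x _ => Finset.sum_nonneg fun i _ =>
    Finset.sum_nonneg fun j _ => sq_nonneg _)).1 key x (Finset.mem_univ _)
  ext j i
  have k2 := (Finset.sum_eq_zero_iff_of_nonneg (fun i _ =>
    Finset.sum_nonneg fun j _ => sq_nonneg _)).1 k1 i (Finset.mem_univ _)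
  have k3 := (Finset.sum_eq_zero_iff_of_nonneg (fun j _ => sq_nonneg _)).1 k2 j (Finset.mem_univ _)
  simpa using k3

theorem RG.x21 (h : RG G b α d) : ∃ R : Matrix V V ℝ, ∀ x y z,
    (Am G * diagonal (Nf G b x) * (Am G * Am G)) y z
      - (Am G * Am G * diagonal (Nf G b x) * Am G) y z = R y z * (Nf G b x y - Nf G b x z) := by
  have hb := h.hb0
  have hne : bt b + 1 ≠ 0 := by
    have : b ^ 2 + b + 1 ≠ 0 := by nlinarith [sq_nonneg (b + 1 / 2)]
    have e : bt b + 1 = (b ^ 2 + b + 1) / b := by unfold bt; field_simp; ring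
    rw [e]; exact div_ne_zero this hb
  set A := Am G
  refine ⟨(bt b + 1)⁻¹ • (A * A * A - ga b α • (A * A) - rh b α d • A), fun x y z => ?_⟩
  have ht := h.td x
  set N := diagonal (Nf G b x) with hN
  have e : (bt b + 1) • (A * N * (A * A) - A * A * N * A) =
      -((A * A * A * N - N * (A * A * A)) - ga b α • (A * A * N - N * (A * A))
        - rh b α d • (A * N - N * A)) := by
    rw [← sub_eq_zero, ← ht]
    simp only [Psi_apply, Phi_apply, Matrix.mul_add, Matrix.mul_sub, Matrix.add_mul,
      Matrix.sub_mul, Matrix.mul_smul, Matrix.smul_mul, Matrix.mul_assoc]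
    module
  have e2 := congrFun (congrFun e y) z
  simp only [hN, Matrix.smul_apply, Matrix.sub_apply, Matrix.neg_apply, Matrix.mul_diagonal,
    Matrix.diagonal_mul, smul_eq_mul] at e2 ⊢
  field_simp
  linear_combination e2

theorem RG.x31 (h : RG G b α d) : ∃ R : Matrix V V ℝ, ∀ x y z,
    (Am G * diagonal (Nf G b x) * (Am G * Am G * Am G)) y z
      - (Am G * Am G * Am G * diagonal (Nf G b x) * Am G) y z
        = R y z * (Nf G b x y - Nf G b x z) := by
  have hb := h.hb0
  have hne : bt b ≠ 0 := by
    have : b ^ 2 + 1 ≠ 0 := by nlinarith [sq_nonneg b]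
    have e : bt b = (b ^ 2 + 1) / b := by unfold bt; field_simp
    rw [e]; exact div_ne_zero this hb
  obtain ⟨R, hR⟩ := h.x21
  set A := Am G
  refine ⟨(bt b)⁻¹ • (A * A * A * A - ga b α • (A * A * A) - rh b α d • (A * A)
      - ga b α • R), fun x y z => ?_⟩
  have ht := h.td x
  have hR' := hR x y z
  set N := diagonal (Nf G b x) with hN
  have e : (bt b) • (A * N * (A * A * A) - A * A * A * N * A) =
      -((A * A * A * A * N - N * (A * A * A * A)) - ga b α • (A * A * A * N - N * (A * A * A))
        - rh b α d • (A * A * N - N * (A * A))) - ga b α • (A * N * (A * A) - A * A * N * A) := by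
    rw [← sub_eq_zero, ← add_zero (0 : Matrix V V ℝ)]
    nth_rewrite 1 [← Matrix.mul_zero A]
    nth_rewrite 2 [← Matrix.zero_mul A]
    rw [← ht]
    simp only [Psi_apply, Phi_apply, Matrix.mul_add, Matrix.mul_sub, Matrix.add_mul,
      Matrix.sub_mul, Matrix.mul_smul, Matrix.smul_mul, Matrix.mul_assoc]
    module
  have e2 := congrFun (congrFun e y) z
  simp only [Matrix.smul_apply, Matrix.sub_apply, Matrix.neg_apply, smul_eq_mul] at e2 ⊢
  rw [hR'] at e2
  simp only [hN, Matrix.mul_diagonal, Matrix.diagonal_mul] at e2 hR' ⊢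
  field_simp
  linear_combination e2
end rg
end CP
namespace CP
open Matrix
section ctx
variable {V : Type*} [Fintype V] [DecidableEq V]

structure Ctx (G : SimpleGraph V) (D : ℕ) (p : ℕ → ℕ → ℕ → ℕ) (b α β : ℝ) : Prop where
  conn : G.Connected
  hD : 4 ≤ D
  hle : ∀ x y : V, G.dist x y ≤ D
  hdr : G.IsDistRegularWith D p
  hcp : HasClassicalParams D p b α β
  ha1 : p 1 1 1 = 0
  ha2 : p 2 1 2 ≠ 0
  ex3 : ∃ x y : V, G.dist x y = 3

variable {G : SimpleGraph V} {D : ℕ} {p : ℕ → ℕ → ℕ → ℕ} {b α β : ℝ}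

lemma step (hc : G.Connected) {u w : V} {i : ℕ} (h : G.dist u w = i + 1) :
    ∃ v, G.dist u v = 1 ∧ G.dist v w = i := by
  obtain ⟨q, hq⟩ := hc.exists_walk_length_eq_dist u w
  cases q with
  | nil => simp at h
  | @cons _ v _ hadj q' =>
    refine ⟨v, SimpleGraph.dist_eq_one_iff_adj.2 hadj, ?_⟩
    have h1 := SimpleGraph.dist_le q'
    have h2 := hc.dist_triangle (u := u) (v := v) (w := w)
    rw [SimpleGraph.dist_eq_one_iff_adj.2 hadj] at h2
    simp at hq
    omega

lemma Ctx.cnt (h : Ctx G D p b α β) {u w : V} (i j : ℕ) (hi : i ≤ D) (hj : j ≤ D) :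
    (∑ v, if G.dist u v = i ∧ G.dist w v = j then (1 : ℝ) else 0) = p (G.dist u w) i j := by
  rw [← h.hdr _ i j (h.hle u w) hi hj u w rfl, Finset.sum_boole, Set.ncard_eq_toFinset_card']
  simp

lemma Ctx.deg (h : Ctx G D p b α β) (u : V) :
    (∑ v, if G.dist u v = 1 then (1 : ℝ) else 0) = p 0 1 1 := by
  have := h.cnt (u := u) (w := u) 1 1 (by have := h.hD; omega) (by have := h.hD; omega)
  simpa only [and_self, SimpleGraph.dist_self] using this

lemma Ctx.part (h : Ctx G D p b α β) {u w : V} (i : ℕ) (hi : G.dist u w = i + 1)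
    (hiD : i + 1 < D) :
    p (i + 1) 1 i + p (i + 1) 1 (i + 1) + p (i + 1) 1 (i + 2) = p 0 1 1 := by
  have e : ((p (i + 1) 1 i + p (i + 1) 1 (i + 1) + p (i + 1) 1 (i + 2) : ℕ) : ℝ) = p 0 1 1 := by
    push_cast
    have q1 := h.cnt (u := u) (w := w) 1 i (by omega) (by omega)
    have q2 := h.cnt (u := u) (w := w) 1 (i + 1) (by omega) (by omega)
    have q3 := h.cnt (u := u) (w := w) 1 (i + 2) (by omega) (by omega)
    rw [hi] at q1 q2 q3
    rw [← h.deg u, ← q1, ← q2, ← q3,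
      ← Finset.sum_add_distrib, ← Finset.sum_add_distrib]
    refine Finset.sum_congr rfl fun v _ => ?_
    by_cases hv : G.dist u v = 1
    · have h1 := h.conn.dist_triangle (u := u) (v := v) (w := w)
      have h2 := h.conn.dist_triangle (u := v) (v := u) (w := w)
      rw [G.dist_comm (u := v) (v := u)] at h2
      rw [G.dist_comm (u := v) (v := w)] at h1 h2
      have : G.dist w v = i ∨ G.dist w v = i + 1 ∨ G.dist w v = i + 2 := by omega
      rcases this with h3 | h3 | h3 <;> simp [hv, h3]
    · simp [hv]
  exact_mod_cast e

lemma Ctx.ex (h : Ctx G D p b α β) :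
    (∃ u v, G.dist u v = 1) ∧ (∃ u v, G.dist u v = 2) ∧ (∃ u v, G.dist u v = 3) := by
  obtain ⟨x, y, hxy⟩ := h.ex3
  obtain ⟨v, h1, h2⟩ := step h.conn (i := 2) hxy
  exact ⟨⟨_, _, h1⟩, ⟨_, _, h2⟩, ⟨_, _, hxy⟩⟩

lemma Ctx.c_pos (h : Ctx G D p b α β) {u w : V} {i : ℕ} (hi : G.dist u w = i + 1) :
    p (i + 1) 1 i ≠ 0 := by
  intro h0
  obtain ⟨v, h1, h2⟩ := step h.conn hi
  have hle := h.hle u w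
  have := h.cnt (u := u) (w := w) 1 i (by have := h.hD; omega) (by omega)
  rw [hi, h0, Nat.cast_zero, Finset.sum_eq_zero_iff_of_nonneg (fun _ _ => by split_ifs <;> norm_num)] at this
  have := this v (Finset.mem_univ _)
  rw [G.dist_comm (u := w)] at this
  simp [h1, h2] at this

lemma Ctx.b_pos (h : Ctx G D p b α β) {u w : V} {i : ℕ} (hi : G.dist u w = i + 1) :
    p i 1 (i + 1) ≠ 0 := by
  intro h0
  obtain ⟨v, h1, h2⟩ := step h.conn hi
  have hle := h.hle u w
  have := h.cnt (u := v) (w := w) 1 (i + 1) (by have := h.hD; omega) (by omega)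
  rw [h2, h0, Nat.cast_zero, Finset.sum_eq_zero_iff_of_nonneg (fun _ _ => by split_ifs <;> norm_num)] at this
  have := this u (Finset.mem_univ _)
  rw [G.dist_comm (u := w), G.dist_comm (u := v)] at this
  simp [h1, hi] at this

lemma Ctx.b0 (h : Ctx G D p b α β) : (p 0 1 1 : ℝ) = gaussBracket b D * β := by
  have := h.hcp.2.2.2 0 (by omega)
  simpa [gaussBracket] using this

lemma Ctx.beta (h : Ctx G D p b α β) : β = 1 + α - α * gaussBracket b D := by
  have hD := h.hD
  obtain ⟨⟨u, v, huv⟩, _⟩ := h.ex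
  have h1 := h.part 0 huv (by omega)
  have hb := h.hcp.2.2.2 1 (by omega)
  have hc := h.hcp.2.2.1 1 (by omega)
  have e : ((p 1 1 0 + p 1 1 1 + p 1 1 2 : ℕ) : ℝ) = p 0 1 1 := by exact_mod_cast h1
  rw [h.ha1, h.b0] at e
  push_cast at e
  simp [gaussBracket] at hb hc
  simp only [gaussBracket] at e ⊢
  rw [hb, hc] at e
  push_cast at e
  linarith

lemma Ctx.b_ne_one (h : Ctx G D p b α β) : b ≠ 1 := by
  rintro rfl
  have hD := h.hD
  have hβ := h.beta
  obtain ⟨_, ⟨u, v, huv⟩, ⟨u', v', huv'⟩⟩ := h.ex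
  have h1 := h.part 1 huv (by omega)
  have hb := h.hcp.2.2.2 2 (by omega)
  have hc := h.hcp.2.2.1 2 (by omega)
  have hc3 := h.hcp.2.2.1 3 (by omega)
  have hp3 := h.c_pos huv'
  have h0 := h.b0
  have e : ((p 2 1 1 + p 2 1 2 + p 2 1 3 : ℕ) : ℝ) = p 0 1 1 := by exact_mod_cast h1
  have ha2 := h.ha2
  push_cast at e
  simp only [gaussBracket, one_pow, Finset.sum_const, Finset.card_range, nsmul_eq_mul,
    mul_one] at *
  norm_num at hb hc hc3
  have a2 : (p 2 1 2 : ℝ) = - 4 * α := by rw [h0, hb, hc] at e; rw [hβ] at e; linarith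
  have i1 : (2 * p 2 1 1 + p 2 1 2 : ℝ) = 4 := by rw [a2, hc]; ring
  have i2 : (2 * p 3 1 2 + 3 * p 2 1 2 : ℝ) = 6 := by rw [a2, hc3]; ring
  norm_cast at i1 i2
  simp only [Nat.reduceAdd] at hp3
  omega

lemma gb (hb1 : b ≠ 1) (n : ℕ) : gaussBracket b n = br b (b ^ n) := by
  unfold gaussBracket br; exact geom_sum_eq hb1 n

lemma Ctx.cf_eq (h : Ctx G D p b α β) (i : ℕ) (hi : i + 1 ≤ D) :
    (p (i + 1) 1 i : ℝ) = cf b α (b ^ (i + 1)) := by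
  have := h.hcp.2.2.1 (i + 1) hi
  have h0 := h.hcp.1
  simp only [Nat.add_sub_cancel] at this
  rw [this, gb h.b_ne_one, gb h.b_ne_one, cf, pow_succ, mul_div_cancel_right₀ _ h0]

lemma Ctx.bf_eq (h : Ctx G D p b α β) (i : ℕ) (hi : i ≤ D) :
    (p i 1 (i + 1) : ℝ) = bf b α (gaussBracket b D) (b ^ i) := by
  have := h.hcp.2.2.2 i hi
  rw [this, bf, ← gb h.b_ne_one, ← h.beta]

lemma Ctx.kf_eq (h : Ctx G D p b α β) : (p 0 1 1 : ℝ) = kf α (gaussBracket b D) := by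
  rw [kf, ← h.beta, h.b0]

lemma Ctx.radA (h : Ctx G D p b α β) (w : V) (g : ℤ → ℝ) :
    Am G *ᵥ rad G w g = rad G w (Bop b α (gaussBracket b D) g) := by
  ext u
  have hD := h.hD
  obtain ⟨i, hi⟩ : ∃ i, G.dist w u = i := ⟨_, rfl⟩
  have hi' : G.dist u w = i := by rw [G.dist_comm, hi]
  have hiD := h.hle w u
  have c1 : (∑ v, if G.dist u v = 1 ∧ G.dist w v + 1 = i then (1 : ℝ) else 0) = cf b α (b ^ i) := by
    rcases i with _ | i
    · simp [cf, br]
    · simp only [add_left_inj]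
      rw [h.cnt 1 i (by omega) (by omega), hi', h.cf_eq i (by omega)]
  have c3 : (∑ v, if G.dist u v = 1 ∧ G.dist w v = i + 1 then (1 : ℝ) else 0)
      = bf b α (gaussBracket b D) (b ^ i) := by
    rcases Nat.lt_or_ge i D with hlt | hge
    · rw [h.cnt 1 (i + 1) (by omega) (by omega), hi', h.bf_eq i (by omega)]
    · have : i = D := by omega
      subst this
      rw [bf, ← gb h.b_ne_one, sub_self, zero_mul]
      apply Finset.sum_eq_zero
      intro v _
      have := h.hle w v
      rw [if_neg]; omega
  have c2 := h.deg u
  rw [h.kf_eq] at c2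
  simp only [Matrix.mulVec, dotProduct, rad, Bop, hi, zpow_natCast, af]
  rw [← c1, ← c3, ← c2]
  simp only [sub_mul, Finset.sum_mul, ← Finset.sum_add_distrib, ← Finset.sum_sub_distrib]
  refine Finset.sum_congr rfl fun v _ => ?_
  simp only [Am]
  by_cases hv : G.dist u v = 1
  · have h1 := h.conn.dist_triangle (u := u) (v := v) (w := w)
    have h2 := h.conn.dist_triangle (u := v) (v := u) (w := w)
    rw [G.dist_comm (u := v) (v := u)] at h2
    rw [G.dist_comm (u := v) (v := w)] at h1 h2
    have : G.dist w v + 1 = i ∨ G.dist w v = i ∨ G.dist w v = i + 1 := by omega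
    rcases this with h3 | h3 | h3
    · have e : (G.dist w v : ℤ) = (i : ℤ) - 1 := by omega
      have e2 : G.dist w v ≠ i + 1 := by omega
      simp [hv, h3, e, e2]
    · simp [hv, h3]
    · have e2 : G.dist w v + 1 ≠ i := by omega
      rw [h3] at e2
      simp [hv, h3, e2]
  · simp [hv]

lemma Ctx.n2 (h : Ctx G D p b α β) :
    ∃ κ ξ : ℝ, ∀ w w', ∑ x, Nf G b x w * Nf G b x w' = κ * Nf G b w w' + ξ := by
  have hb := h.hcp.1
  have hb1 := h.b_ne_one
  set d := gaussBracket b D with hd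
  let n : ℤ → ℝ := fun i => ∑ s ∈ Finset.range (D + 1), ∑ t ∈ Finset.range (D + 1),
    (b ^ s)⁻¹ * (b ^ t)⁻¹ * (p i.toNat s t : ℝ)
  have hn : ∀ w w', ∑ x, Nf G b x w * Nf G b x w' = n (G.dist w w') := by
    intro w w'
    simp only [n, Int.toNat_natCast]
    have : ∀ s ∈ Finset.range (D + 1), ∀ t ∈ Finset.range (D + 1),
        (b ^ s)⁻¹ * (b ^ t)⁻¹ * (p (G.dist w w') s t : ℝ) =
        ∑ x, (b ^ s)⁻¹ * (b ^ t)⁻¹ * (if G.dist w x = s ∧ G.dist w' x = t then (1 : ℝ) else 0) := by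
      intro s hs t ht
      rw [← Finset.mul_sum, h.cnt s t (by simp at hs; omega) (by simp at ht; omega)]
    rw [Finset.sum_congr rfl fun s hs => Finset.sum_congr rfl fun t ht => this s hs t ht]
    rw [Finset.sum_congr rfl fun s hs => Finset.sum_comm]
    rw [Finset.sum_comm]
    refine Finset.sum_congr rfl fun x _ => ?_
    rw [Finset.sum_eq_single (G.dist w x), Finset.sum_eq_single (G.dist w' x)]
    · simp [Nf, G.dist_comm]
    · intro t _ ht; rw [if_neg (fun e => ht e.2.symm), mul_zero]
    · intro hx; have := h.hle w' x; simp at hx; omega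
    · intro s _ hs
      apply Finset.sum_eq_zero
      intro t _; rw [if_neg (fun e => hs e.1.symm), mul_zero]
    · intro hx; have := h.hle w x; simp at hx; omega
  have hr : b⁻¹ ≠ 1 := by simpa using hb1
  have hr' : 1 - b⁻¹ ≠ 0 := sub_ne_zero.mpr hr.symm
  let κ := (n 0 - n 1) / (1 - b⁻¹)
  let ξ := n 0 - κ
  have hk : κ * (1 - b⁻¹) = n 0 - n 1 := div_mul_cancel₀ _ hr'
  refine ⟨κ, ξ, fun w u => ?_⟩
  rw [hn]
  let g : ℤ → ℝ := fun i => n i - κ * (b ^ i)⁻¹ - ξ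
  have g0 : g 0 = 0 := by simp [g, ξ]
  have g1 : g 1 = 0 := by simp only [g, ξ, zpow_one]; linarith
  set θ := kf α d / b - (b + 1) / b
  set τ := (b + 1) / b
  have radN : ∀ x u, ∑ v, Am G u v * Nf G b x v = θ * Nf G b x u + τ := by
    intro x u
    have := congrFun (h.radA x (fun j => (b ^ j)⁻¹)) u
    simp only [rad, opN b α (gaussBracket b D) hb hb1, Matrix.mulVec, dotProduct] at this
    simpa [Nf] using this
  have hF : ∀ u, Bop b α d n (G.dist w u) = θ * n (G.dist w u) + τ * ∑ x, Nf G b x w := by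
    intro u
    have e := congrFun (h.radA w n) u
    simp only [rad, Matrix.mulVec, dotProduct] at e
    rw [← e]
    simp only [← hn, Finset.mul_sum]
    rw [Finset.sum_comm, ← Finset.sum_add_distrib]
    refine Finset.sum_congr rfl fun x _ => ?_
    have := radN x u
    calc _ = Nf G b x w * ∑ v, Am G u v * Nf G b x v := by
          rw [Finset.mul_sum]; exact Finset.sum_congr rfl fun v _ => by ring
      _ = _ := by rw [this]; ring
  obtain ⟨C, hC⟩ : ∃ C, ∀ u, Bop b α d g (G.dist w u) = θ * g (G.dist w u) + C := by
    refine ⟨τ * ∑ x, Nf G b x w - κ * τ + θ * ξ - ξ * kf α d, fun u => ?_⟩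
    have e1 := hF u
    have e2 := opN b α d hb hb1 (G.dist w u)
    simp only [Bop, g, af] at e1 e2 ⊢
    linear_combination e1 - κ * e2
  have hC0 : C = 0 := by
    have e := hC w
    simp [Bop, g0, g1, cf, br] at e
    exact e.symm
  subst hC0
  have main : ∀ m : ℕ, ∀ u, G.dist u w = m → g m = 0 := by
    intro m
    induction m using Nat.strong_induction_on with
    | _ m ih =>
      intro u hu
      rcases m with _ | m
      · simpa using g0
      obtain ⟨v, hv1, hv2⟩ := step h.conn hu
      have e := hC v
      rw [G.dist_comm, hv2] at e
      have gm : g m = 0 := ih m (by omega) v hv2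
      have gm1 : cf b α (b ^ (m : ℤ)) * g ((m : ℤ) - 1) = 0 := by
        rcases m with _ | m
        · simp [cf, br]
        · obtain ⟨v', hv1', hv2'⟩ := step h.conn hv2
          have := ih m (by omega) v' hv2'
          push_cast
          rw [add_sub_cancel_right, this, mul_zero]
      have hm := h.hle u w
      have hbp := h.b_pos hu
      have hbe := h.bf_eq m (by omega)
      simp only [Bop] at e
      rw [← hd] at hbe
      rw [gm1, gm, zpow_natCast, ← hbe] at e
      simp at e
      rcases e with e | e
      · exact absurd e hbp
      · exact_mod_cast e
  have := main _ u rfl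
  simp only [g] at this
  rw [G.dist_comm] at this
  simp only [Nf]
  linarith

lemma Ctx.toRG (h : Ctx G D p b α β) : RG G b α (gaussBracket b D) where
  hb0 := h.hcp.1
  hb1 := h.b_ne_one
  radA := h.radA
  n2 := h.n2
  conn := h.conn

end ctx
end CP
namespace CP
open Matrix
section bal
variable {V : Type*} [Fintype V] [DecidableEq V]
variable {G : SimpleGraph V} {D : ℕ} {p : ℕ → ℕ → ℕ → ℕ} {b α β : ℝ}

noncomputable def SA (G : SimpleGraph V) (b : ℝ) (h : ℕ) (x y z : V) : ℝ :=
  ∑ w, if G.dist y w = 1 ∧ G.dist z w = h then Nf G b x w else 0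

lemma Ctx.tri (h : Ctx G D p b α β) (x y z : V) :
    G.dist x z ≤ G.dist x y + G.dist y z := h.conn.dist_triangle

lemma Ctx.sq (h : Ctx G D p b α β) (w z : V) : (Am G * Am G) w z = p (G.dist w z) 1 1 := by
  have hD := h.hD
  rw [← h.cnt 1 1 (by omega) (by omega), Matrix.mul_apply]
  refine Finset.sum_congr rfl fun v _ => ?_
  simp only [Am, G.dist_comm (u := v) (v := z)]
  split_ifs <;> simp_all

lemma Ctx.sq' (h : Ctx G D p b α β) (w z : V) (hwz : 1 ≤ G.dist w z) :
    (Am G * Am G) w z = if G.dist w z = 2 then (p 2 1 1 : ℝ) else 0 := by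
  have hD := h.hD
  split_ifs with h2
  · rw [h.sq, h2]
  · by_cases h1 : G.dist w z = 1
    · rw [h.sq, h1, h.ha1]; simp
    · rw [h.sq, ← h.cnt 1 1 (by omega) (by omega)]
      apply Finset.sum_eq_zero
      intro v _
      rw [if_neg]
      rintro ⟨e1, e2⟩
      have := h.tri w v z
      rw [G.dist_comm (u := v)] at this
      omega

lemma Ctx.cube (h : Ctx G D p b α β) (w z : V) (hwz : 2 ≤ G.dist w z) :
    (Am G * Am G * Am G) w z = p 2 1 1 * p (G.dist w z) 1 2 := by
  have hD := h.hD
  rw [← h.cnt 1 2 (by omega) (by omega), Matrix.mul_assoc, Matrix.mul_apply, Finset.mul_sum]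
  refine Finset.sum_congr rfl fun v _ => ?_
  by_cases hv : G.dist w v = 1
  · have := h.tri w v z
    rw [h.sq' v z (by omega), G.dist_comm (u := z)]
    simp [Am, hv]
  · simp [Am, hv]

lemma Ctx.cube' (h : Ctx G D p b α β) (w z : V) (hwz : 2 ≤ G.dist w z) :
    (Am G * Am G * Am G) w z = p 2 1 1 * ((if G.dist w z = 2 then (p 2 1 2 : ℝ) else 0)
      + (if G.dist w z = 3 then (p 3 1 2 : ℝ) else 0)) := by
  have hD := h.hD
  rw [h.cube w z hwz]
  congr 1
  by_cases h2 : G.dist w z = 2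
  · simp [h2]
  by_cases h3 : G.dist w z = 3
  · simp [h3]
  simp only [h2, h3, if_false, add_zero]
  rw [← h.cnt 1 2 (by omega) (by omega)]
  apply Finset.sum_eq_zero
  intro v _
  rw [if_neg]
  rintro ⟨e1, e2⟩
  have := h.tri w v z
  rw [G.dist_comm (u := v)] at this
  omega

lemma mulD (A B : Matrix V V ℝ) (f : V → ℝ) (y z : V) :
    (A * diagonal f * B) y z = ∑ w, A y w * f w * B w z := by
  rw [Matrix.mul_apply]; simp only [Matrix.mul_diagonal]

lemma Ctx.ent2 (h : Ctx G D p b α β) (x y z : V) (hyz : 2 ≤ G.dist y z) :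
    (Am G * diagonal (Nf G b x) * (Am G * Am G)) y z = p 2 1 1 * SA G b 2 x y z := by
  rw [mulD, SA, Finset.mul_sum]
  refine Finset.sum_congr rfl fun w _ => ?_
  by_cases hv : G.dist y w = 1
  · have := h.tri y w z
    rw [h.sq' w z (by omega), G.dist_comm (u := z)]
    simp [Am, hv, mul_comm]
  · simp [Am, hv]

lemma Ctx.ent2' (h : Ctx G D p b α β) (x y z : V) (hyz : 2 ≤ G.dist y z) :
    (Am G * Am G * diagonal (Nf G b x) * Am G) y z = p 2 1 1 * SA G b 2 x z y := by
  rw [mulD, SA, Finset.mul_sum]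
  refine Finset.sum_congr rfl fun w _ => ?_
  by_cases hv : G.dist z w = 1
  · have := h.tri y w z
    have hv' : G.dist w z = 1 := by rw [G.dist_comm, hv]
    rw [h.sq' y w (by omega)]
    simp [Am, hv, hv']
  · have hv' : ¬ G.dist w z = 1 := by rwa [G.dist_comm]
    simp [Am, hv, hv']

lemma Ctx.ent3 (h : Ctx G D p b α β) (x y z : V) (hyz : 3 ≤ G.dist y z) :
    (Am G * diagonal (Nf G b x) * (Am G * Am G * Am G)) y z =
      p 2 1 1 * (p 2 1 2 * SA G b 2 x y z + p 3 1 2 * SA G b 3 x y z) := by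
  rw [mulD, SA, SA, Finset.mul_sum, Finset.mul_sum, ← Finset.sum_add_distrib, Finset.mul_sum]
  refine Finset.sum_congr rfl fun w _ => ?_
  by_cases hv : G.dist y w = 1
  · have := h.tri y w z
    rw [h.cube' w z (by omega), G.dist_comm (u := z)]
    simp only [Am, hv, true_and, if_true]
    split_ifs <;> ring
  · simp [Am, hv]

lemma Ctx.ent3' (h : Ctx G D p b α β) (x y z : V) (hyz : 3 ≤ G.dist y z) :
    (Am G * Am G * Am G * diagonal (Nf G b x) * Am G) y z =
      p 2 1 1 * (p 2 1 2 * SA G b 2 x z y + p 3 1 2 * SA G b 3 x z y) := by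
  rw [mulD, SA, SA, Finset.mul_sum, Finset.mul_sum, ← Finset.sum_add_distrib, Finset.mul_sum]
  refine Finset.sum_congr rfl fun w _ => ?_
  by_cases hv : G.dist z w = 1
  · have := h.tri y w z
    have hv' : G.dist w z = 1 := by rw [G.dist_comm, hv]
    rw [h.cube' y w (by omega)]
    simp only [Am, hv, hv', true_and, if_true]
    split_ifs <;> ring
  · have hv' : ¬ G.dist w z = 1 := by rwa [G.dist_comm]
    simp [Am, hv, hv']

lemma Ctx.c2 (h : Ctx G D p b α β) : (p 2 1 1 : ℝ) ≠ 0 := by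
  obtain ⟨_, ⟨u, v, huv⟩, _⟩ := h.ex
  exact_mod_cast h.c_pos huv

lemma Ctx.c3 (h : Ctx G D p b α β) : (p 3 1 2 : ℝ) ≠ 0 := by
  obtain ⟨_, _, ⟨u, v, huv⟩⟩ := h.ex
  exact_mod_cast h.c_pos huv

lemma Ctx.bal (h : Ctx G D p b α β) (n : ℕ) (hn : n = 2 ∨ n = 3) (y z : V)
    (hyz : G.dist y z = n) :
    ∃ ρ : ℝ, ∀ x, SA G b n x y z - SA G b n x z y = ρ * (Nf G b x y - Nf G b x z) := by
  have c2 := h.c2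
  have c3 := h.c3
  obtain ⟨R, hR⟩ := h.toRG.x21
  obtain ⟨S, hS⟩ := h.toRG.x31
  rcases hn with rfl | rfl
  · refine ⟨R y z / p 2 1 1, fun x => ?_⟩
    have e := hR x y z
    rw [h.ent2 x y z (by omega), h.ent2' x y z (by omega)] at e
    field_simp
    linear_combination e
  · refine ⟨(S y z - p 2 1 2 * R y z) / (p 2 1 1 * p 3 1 2), fun x => ?_⟩
    have e := hR x y z
    have e' := hS x y z
    rw [h.ent2 x y z (by omega), h.ent2' x y z (by omega)] at e
    rw [h.ent3 x y z (by omega), h.ent3' x y z (by omega)] at e'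
    field_simp
    linear_combination e' - p 2 1 2 * e

/-- sum of a constant over the set -/
lemma Ctx.SA_const (h : Ctx G D p b α β) (n : ℕ) (hn : n ≤ D) (x y z : V) (c : ℝ)
    (hc : ∀ w, G.dist y w = 1 → G.dist z w = n → Nf G b x w = c) :
    SA G b n x y z = p (G.dist y z) 1 n * c := by
  have hD := h.hD
  rw [← h.cnt 1 n (by omega) (by omega), SA, Finset.sum_mul]
  refine Finset.sum_congr rfl fun w _ => ?_
  split_ifs with hw
  · rw [hc w hw.1 hw.2, one_mul]
  · simp

lemma Ctx.bne (h : Ctx G D p b α β) (n : ℕ) (hn : n = 2 ∨ n = 3) : b ^ n ≠ 1 := by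
  have h1 := h.b_ne_one
  have h2 := h.hcp.2.1
  intro e
  rcases hn with rfl | rfl
  · have : (b - 1) * (b + 1) = 0 := by linear_combination e
    rcases mul_eq_zero.1 this with e | e
    · exact h1 (sub_eq_zero.1 e)
    · exact h2 (eq_neg_of_add_eq_zero_left e)
  · have : (b - 1) * (b ^ 2 + b + 1) = 0 := by linear_combination e
    rcases mul_eq_zero.1 this with e | e
    · exact h1 (sub_eq_zero.1 e)
    · nlinarith [sq_nonneg (b + 1 / 2)]

lemma Ctx.bal' (h : Ctx G D p b α β) (n : ℕ) (hn : n = 2 ∨ n = 3) (y z : V)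
    (hyz : G.dist y z = n) (x : V) :
    (b ^ n - 1) * (SA G b n x y z - SA G b n x z y) =
      p n 1 n * (b ^ n * b⁻¹ - 1) * (Nf G b x y - Nf G b x z) := by
  have hD := h.hD
  have hb := h.hcp.1
  obtain ⟨ρ, hρ⟩ := h.bal n hn y z hyz
  have e := hρ y
  have hzy : G.dist z y = n := by rw [G.dist_comm, hyz]
  rw [h.SA_const n (by omega) y y z b⁻¹ (fun w h1 _ => by simp [Nf, h1]),
    h.SA_const n (by omega) y z y (b ^ n)⁻¹ (fun w _ h1 => by simp [Nf, h1])] at e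
  simp only [Nf, hyz, SimpleGraph.dist_self, hzy] at e
  rw [hρ x]
  have hbn : b ^ n ≠ 0 := pow_ne_zero _ hb
  simp only [Nat.cast_zero, zpow_zero, inv_one, zpow_natCast] at e
  have hinv : b ^ n * (b ^ n)⁻¹ = 1 := mul_inv_cancel₀ hbn
  linear_combination (Nf G b x z - Nf G b x y) * b ^ n * e - (ρ - p n 1 n) * (Nf G b x z - Nf G b x y) * hinv

lemma Ctx.notri (h : Ctx G D p b α β) {u v w : V} (h1 : G.dist u v = 1) (h2 : G.dist u w = 1)
    (h3 : G.dist v w = 1) : False := by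
  have hD := h.hD
  have := h.cnt (u := u) (w := v) 1 1 (by omega) (by omega)
  rw [h1, h.ha1, Nat.cast_zero,
    Finset.sum_eq_zero_iff_of_nonneg (fun _ _ => by split_ifs <;> norm_num)] at this
  have := this w (Finset.mem_univ _)
  simp [h2, h3] at this

/-- two distinct neighbours of a vertex are at distance two -/
lemma Ctx.two (h : Ctx G D p b α β) {u v w : V} (h1 : G.dist u v = 1) (h2 : G.dist u w = 1)
    (h3 : v ≠ w) : G.dist v w = 2 := by
  have e1 : G.dist v w ≠ 0 := fun e => h3 ((h.conn.dist_eq_zero_iff).1 e)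
  have e2 : G.dist v w ≠ 1 := fun e => h.notri h1 h2 e
  have := h.tri v u w
  rw [G.dist_comm (u := v) (v := u)] at this
  omega

/-- no parallelograms of length `n+1` -/
lemma Ctx.np (h : Ctx G D p b α β) (n : ℕ) (hn : n = 2 ∨ n = 3) {x y z w : V}
    (hxy : G.dist x y = 1) (hzw : G.dist z w = 1) (hxz : G.dist x z = n + 1)
    (hyz : G.dist y z = n) (hyw : G.dist y w = n) (hxw : G.dist x w = n) : False := by
  have hD := h.hD
  have hb := h.hcp.1
  have hb1 := h.b_ne_one
  have hbn : b ^ n ≠ 0 := pow_ne_zero _ hb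
  have e := h.bal' n hn y z hyz x
  have hyx : G.dist y x = 1 := by rw [G.dist_comm, hxy]
  have s1 : SA G b n x y z = p n 1 n * (b ^ 2)⁻¹ := by
    rw [h.SA_const n (by omega) x y z (b ^ 2)⁻¹, hyz]
    intro v h1 h2
    have : x ≠ v := by
      rintro rfl; rw [G.dist_comm] at h2; omega
    have := h.two hyx h1 this
    simp only [Nf, this]; norm_cast
  have s2 : SA G b n x z y = p n 1 n * (b ^ (n + 1))⁻¹ := by
    have hne : b ^ n - 1 ≠ 0 := sub_ne_zero.mpr (h.bne n hn)
    rw [s1] at e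
    simp only [Nf, hxy, hxz] at e
    apply mul_left_cancel₀ hne
    have e3 : b ^ (n + 1) = b ^ n * b := pow_succ _ _
    simp only [zpow_natCast, pow_one, e3] at e
    rw [e3]
    generalize b ^ n = t at *
    field_simp at e ⊢
    apply mul_left_cancel₀ hb
    linear_combination -e
  have s3 : ∑ v, (if G.dist z v = 1 ∧ G.dist y v = n then
      (if G.dist x v = n then (1 : ℝ) else 0) else 0) * ((b ^ n)⁻¹ - (b ^ (n + 1))⁻¹) = 0 := by
    rw [SA, show p n 1 n = p (G.dist z y) 1 n by rw [G.dist_comm, hyz],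
      ← h.cnt 1 n (by omega) (by omega), Finset.sum_mul, ← sub_eq_zero,
      ← Finset.sum_sub_distrib] at s2
    refine Eq.trans (Finset.sum_congr rfl fun v _ => ?_) s2
    by_cases hv : G.dist z v = 1 ∧ G.dist y v = n
    · have t1 := h.tri x y v
      have t2 := h.tri x v z
      rw [G.dist_comm (u := v)] at t2
      rw [if_pos hv, if_pos hv, if_pos hv]
      have : G.dist x v = n ∨ G.dist x v = n + 1 := by omega
      rcases this with e | e
      · rw [if_pos e, Nf, e, zpow_natCast]; ring
      · rw [if_neg (by omega), Nf, e, zpow_natCast]; ring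
    · rw [if_neg hv, if_neg hv, if_neg hv]; ring
  rw [← Finset.sum_mul] at s3
  have hne : (b ^ n)⁻¹ - (b ^ (n + 1))⁻¹ ≠ 0 := by
    rw [pow_succ]
    intro e
    field_simp at e
    apply hb1
    linear_combination e
  have s4 := (mul_eq_zero.1 s3).resolve_right hne
  rw [Finset.sum_eq_zero_iff_of_nonneg (fun _ _ => by split_ifs <;> norm_num)] at s4
  have := s4 w (Finset.mem_univ _)
  simp [hzw, hyw, hxw] at this
end bal
end CP
namespace CP
section lev
variable {V : Type*} [Fintype V] [DecidableEq V]
variable {G : SimpleGraph V} {D : ℕ} {p : ℕ → ℕ → ℕ → ℕ} {b α β : ℝ}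

lemma cm (G : SimpleGraph V) (u v : V) : G.dist u v = G.dist v u := G.dist_comm

lemma Ctx.L3a (h : Ctx G D p b α β) {x c c' : V} (h1 : G.dist c c' = 1) (h2 : G.dist x c = 3)
    (h3 : G.dist x c' = 3) : Bset G x c ⊆ Bset G x c' := by
  rintro u ⟨e1, e2⟩
  refine ⟨e1, ?_⟩
  have := h.tri c c' u
  have := h.tri c' x u
  have := cm G x c'
  have := cm G x u
  have := cm G c u
  have := cm G c' u
  by_contra hne
  exact h.np 3 (Or.inr rfl) (x := u) (y := x) (z := c) (w := c') (by omega) h1 (by omega)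
    (by omega) (by omega) (by omega)

lemma Ctx.L3 (h : Ctx G D p b α β) {x c c' : V} (h1 : G.dist c c' = 1) (h2 : G.dist x c = 3)
    (h3 : G.dist x c' = 3) : Bset G x c = Bset G x c' :=
  Set.Subset.antisymm (h.L3a h1 h2 h3) (h.L3a (by rw [cm, h1]) h3 h2)

lemma Ctx.two' (h : Ctx G D p b α β) {u v w : V} (h1 : G.dist v u = 1) (h2 : G.dist u w = 1)
    (h3 : v ≠ w) : G.dist v w = 2 := h.two (by rw [cm, h1]) h2 h3

/-- first case at level two -/
lemma Ctx.case1 (h : Ctx G D p b α β) {x z c w e : V} (hxz : G.dist x z = 2)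
    (hxc : G.dist x c = 3) (hzc : G.dist z c = 1) (hzw : G.dist z w = 1) (hxw : G.dist x w = 2)
    (hce : G.dist c e = 1) (hew : G.dist e w = 1) (hez : e ≠ z) : G.dist x e = 3 := by
  have hD := h.hD
  have t1 := h.tri x w e
  have t2 := h.tri x e c
  have := cm G c e
  have := cm G e w
  have := cm G z c
  by_contra hne
  have hxe : G.dist x e = 2 := by omega
  have hez2 : G.dist e z = 2 := h.two hce (by omega) hez
  have q1 := h.hdr 2 1 1 (by omega) (by omega) (by omega) x e hxe
  have q2 := h.hdr 2 1 1 (by omega) (by omega) (by omega) e z hez2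
  have : {v | G.dist x v = 1 ∧ G.dist e v = 1} ⊂ {v | G.dist e v = 1 ∧ G.dist z v = 1} := by
    refine (Set.ssubset_iff_of_subset ?_).2 ⟨c, ⟨by omega, hzc⟩, fun hc => ?_⟩
    · rintro u ⟨u1, u2⟩
      refine ⟨u2, ?_⟩
      have := cm G x u
      have := cm G e u
      have := cm G z u
      have := h.tri x u c
      have := h.tri u e c
      have huw : u ≠ w := by rintro rfl; omega
      have := h.two u2 hew huw
      have := h.tri u x z
      have := h.tri x u z
      by_contra hz
      have : G.dist u z = 2 ∨ G.dist u z = 3 := by omega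
      rcases this with k | k
      · exact h.np 2 (Or.inl rfl) (x := x) (y := u) (z := c) (w := z) u1 (by omega) (by omega)
          (by omega) (by omega) (by omega)
      · exact h.np 2 (Or.inl rfl) (x := u) (y := x) (z := z) (w := w) (by omega) (by omega)
          (by omega) (by omega) (by omega) (by omega)
    · have := hc.1
      omega
  have := Set.ncard_lt_ncard this (Set.toFinite _)
  omega

lemma Ctx.uniq (h : Ctx G D p b α β) (hp : p 2 1 1 = 1) {s t u v : V} (hst : G.dist s t = 2)
    (h1 : G.dist s u = 1) (h2 : G.dist t u = 1) (h3 : G.dist s v = 1) (h4 : G.dist t v = 1) :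
    u = v := by
  have hD := h.hD
  have q1 := h.hdr 2 1 1 (by omega) (by omega) (by omega) s t hst
  rw [hp] at q1
  exact (Set.ncard_le_one (Set.toFinite _)).1 q1.le u ⟨h1, h2⟩ v ⟨h3, h4⟩

/-- the `S` claim -/
lemma Ctx.claimS (h : Ctx G D p b α β) (hp : p 2 1 1 = 1) {x z c w s : V} (hxz : G.dist x z = 2)
    (hxc : G.dist x c = 3) (hzc : G.dist z c = 1) (hzw : G.dist z w = 1) (hxw : G.dist x w = 2)
    (hws : G.dist w s = 1) (hcs : G.dist c s = 2) : G.dist x s = 3 := by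
  have := cm G z c
  have := cm G z w
  have := cm G c s
  have := cm G w s
  have := cm G z s
  have hsz : G.dist s z = 2 := h.two hws (by omega) (by rintro rfl; omega)
  have := h.tri x w s
  have := h.tri x s c
  by_contra hne
  have : G.dist x s = 1 ∨ G.dist x s = 2 := by omega
  rcases this with k | k
  · exact h.np 2 (Or.inl rfl) (x := x) (y := s) (z := c) (w := z) k (by omega) (by omega)
      (by omega) (by omega) (by omega)
  obtain ⟨u, xu, us⟩ := step h.conn (i := 1) k
  have := cm G x u
  have := cm G u s
  have := cm G u z
  have huw : G.dist u w = 2 := h.two' us (by omega) (by rintro rfl; omega)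
  have := h.tri u x z
  have := h.tri x u z
  have : G.dist u z = 1 ∨ G.dist u z = 2 ∨ G.dist u z = 3 := by omega
  rcases this with k | k | k
  · have := h.uniq hp (s := z) (t := s) (u := u) (v := w) (by omega) (by omega) (by omega)
      (by omega) (by omega)
    subst this
    omega
  · have := h.tri x u c
    have := h.tri u z c
    have : G.dist u c = 2 ∨ G.dist u c = 3 := by omega
    rcases this with l | l
    · exact h.np 2 (Or.inl rfl) (x := x) (y := u) (z := c) (w := z) (by omega) (by omega)
        (by omega) (by omega) (by omega) (by omega)
    · exact h.np 2 (Or.inl rfl) (x := u) (y := s) (z := c) (w := z) (by omega) (by omega)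
        (by omega) (by omega) (by omega) (by omega)
  · exact h.np 2 (Or.inl rfl) (x := u) (y := x) (z := z) (w := w) (by omega) (by omega)
      (by omega) (by omega) (by omega) (by omega)

/-- the `T` claim -/
lemma Ctx.claimT (h : Ctx G D p b α β) (hp : p 2 1 1 = 1) {x z c w t : V} (hxz : G.dist x z = 2)
    (hxc : G.dist x c = 3) (hzc : G.dist z c = 1) (hzw : G.dist z w = 1) (hxw : G.dist x w = 2)
    (hcw : G.dist c w = 2) (hct : G.dist c t = 1) (hwt : G.dist w t = 2) :
    G.dist x t = 2 ∨ (G.dist x t = 3 ∧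
      ∃ s, G.dist w s = 1 ∧ G.dist t s = 1 ∧ G.dist x s = 3) := by
  obtain ⟨s, ws, st⟩ := step h.conn (i := 1) hwt
  have := cm G z c
  have := cm G z w
  have := cm G c t
  have := cm G c w
  have := cm G w s
  have := cm G s t
  have hcs : G.dist c s = 2 := h.two' hct (by omega) (by rintro rfl; omega)
  have hxs := h.claimS hp hxz hxc hzc hzw hxw ws hcs
  have := h.tri x t c
  have := h.tri x c t
  have : G.dist x t = 2 ∨ G.dist x t = 3 ∨ G.dist x t = 4 := by omega
  rcases this with k | k | k
  · exact Or.inl k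
  · exact Or.inr ⟨k, s, ws, by omega, hxs⟩
  exfalso
  obtain ⟨u, xu, uz⟩ := step h.conn (i := 1) hxz
  have := cm G x u
  have := cm G u z
  have huw : G.dist u w = 2 := h.two' uz hzw (by rintro rfl; omega)
  have := h.tri x u c
  have := h.tri u z c
  have := h.tri x u s
  have := h.tri u w s
  have : G.dist u s = 2 ∨ G.dist u s = 3 := by omega
  rcases this with l | l
  · exact h.np 2 (Or.inl rfl) (x := x) (y := u) (z := s) (w := w) (by omega) (by omega)
      (by omega) (by omega) (by omega) (by omega)
  have := h.tri x u t
  have := h.tri u c t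
  exact h.np 3 (Or.inr rfl) (x := x) (y := u) (z := t) (w := s) (by omega) (by omega)
    (by omega) (by omega) (by omega) (by omega)

/-- the exceptional situation forces `b = -2` -/
lemma Ctx.bm2 (h : Ctx G D p b α β) (hp : p 2 1 1 = 1) {x z c w : V} (hxz : G.dist x z = 2)
    (hxc : G.dist x c = 3) (hzc : G.dist z c = 1) (hzw : G.dist z w = 1) (hxw : G.dist x w = 2)
    (hcw : G.dist c w = 2)
    (hT : ∀ t, G.dist c t = 1 → G.dist w t = 2 → G.dist x t = 2) : b = -2 := by
  have hD := h.hD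
  have hb := h.hcp.1
  have hb1 := h.b_ne_one
  have ha : (p 2 1 2 : ℝ) ≠ 0 := by exact_mod_cast h.ha2
  have e := h.bal' 2 (Or.inl rfl) c w hcw x
  rw [h.SA_const 2 (by omega) x c w (b ^ 2)⁻¹ (fun t t1 t2 => by
      simp only [Nf, hT t t1 t2]; norm_cast),
    h.SA_const 2 (by omega) x w c (b ^ 3)⁻¹ (fun t t1 t2 => by
      simp only [Nf, h.claimS hp hxz hxc hzc hzw hxw t1 t2]; norm_cast), cm G w c, hcw] at e
  simp only [Nf, hxc, hxw, zpow_natCast] at e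
  have e2 : (p 2 1 2 : ℝ) * ((b - 1) ^ 2 * (b + 2)) = 0 := by
    field_simp at e
    linear_combination (p 2 1 2 : ℝ) * (b - 1) * e
  have e3 := (mul_eq_zero.1 e2).resolve_left ha
  have e4 := (mul_eq_zero.1 e3).resolve_left (pow_ne_zero 2 (sub_ne_zero.2 hb1))
  linarith

lemma Ctx.exc (h : Ctx G D p b α β) (hp : p 2 1 1 = 1) {x z c w : V} (hxz : G.dist x z = 2)
    (hxc : G.dist x c = 3) (hzc : G.dist z c = 1) (hzw : G.dist z w = 1) (hxw : G.dist x w = 2)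
    (hcw : G.dist c w = 2)
    (hT : ∀ t, G.dist c t = 1 → G.dist w t = 2 → G.dist x t = 2) :
    ∃ s, G.dist w s = 1 ∧ G.dist x s = 3 ∧ Bset G x s = Bset G x c := by
  have hD := h.hD
  have hb := h.bm2 hp hxz hxc hzc hzw hxw hcw hT
  have := cm G z c
  have := cm G z w
  have := cm G c w
  have q := h.hdr 2 1 2 (by omega) (by omega) (by omega) w c (by omega)
  obtain ⟨s, ws, cs⟩ := Set.nonempty_of_ncard_ne_zero (q.trans_ne h.ha2)
  have hxs := h.claimS hp hxz hxc hzc hzw hxw ws cs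
  refine ⟨s, ws, hxs, ?_⟩
  symm
  have n1 := h.hdr 3 1 4 (by omega) (by omega) (by omega) x c hxc
  have n2 := h.hdr 3 1 4 (by omega) (by omega) (by omega) x s hxs
  have r1 : Bset G x c = {v | G.dist x v = 1 ∧ G.dist c v = 4} := by rw [Bset, hxc]
  have r2 : Bset G x s = {v | G.dist x v = 1 ∧ G.dist s v = 4} := by rw [Bset, hxs]
  rw [r1, r2]
  refine Set.eq_of_subset_of_ncard_le ?_ (by omega) (Set.toFinite _)
  rintro u ⟨xu, cu⟩
  refine ⟨xu, ?_⟩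
  have := cm G x u
  have := cm G c u
  have uz : G.dist u z = 3 := by
    have := h.tri u x z
    have := h.tri u z c
    omega
  have uw : G.dist u w = 3 := by
    have := h.tri u x w
    have := h.tri u w z
    by_contra hne
    exact h.np 2 (Or.inl rfl) (x := u) (y := x) (z := z) (w := w) (by omega) (by omega)
      (by omega) (by omega) (by omega) (by omega)
  have ut : ∀ t, G.dist c t = 1 → G.dist w t = 2 → G.dist u t = 3 := by
    intro t t1 t2
    have := hT t t1 t2
    have := h.tri u x t
    have := h.tri u t c
    have := cm G c t
    omega
  have us : ∀ s, G.dist w s = 1 → G.dist c s = 2 → G.dist u s = 3 ∨ G.dist u s = 4 := by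
    intro s ws cs
    have := cm G w s
    have := cm G c s
    have := h.claimS hp hxz hxc hzc hzw hxw ws cs
    have := h.tri u x s
    have := h.tri u s c
    by_contra hne
    have us : G.dist u s = 2 := by omega
    obtain ⟨v, uv, vs⟩ := step h.conn (i := 1) us
    have := h.tri v s c
    have := h.tri u v c
    have sz : G.dist s z = 2 := h.two ws (by omega) (by rintro rfl; omega)
    have := h.tri u v z
    have := h.tri v s z
    have : G.dist v z = 2 ∨ G.dist v z = 3 := by omega
    rcases this with l | l
    · exact h.np 2 (Or.inl rfl) (x := v) (y := s) (z := c) (w := z) (by omega) (by omega)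
        (by omega) (by omega) (by omega) (by omega)
    · exact h.np 3 (Or.inr rfl) (x := u) (y := v) (z := c) (w := z) (by omega) (by omega)
        (by omega) (by omega) (by omega) (by omega)
  have e := h.bal' 2 (Or.inl rfl) c w hcw u
  have nf3 : ∀ t, G.dist u t = 3 → Nf G b u t = -1 / 8 := by
    intro t ht
    simp only [Nf, ht, hb, zpow_natCast]; norm_num
  have nf4 : ∀ t, G.dist u t = 4 → Nf G b u t = 1 / 16 := by
    intro t ht
    simp only [Nf, ht, hb, zpow_natCast]; norm_num
  rw [h.SA_const 2 (by omega) u c w (-1 / 8) (fun t t1 t2 => nf3 t (ut t t1 t2)), hcw,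
    nf4 c (by omega), nf3 w uw, hb] at e
  have e2 : SA G b 2 u w c = p (G.dist w c) 1 2 * (1 / 16) := by
    rw [cm G w c, hcw, hb]
    linear_combination (-1 / 3) * e
  rw [← h.cnt 1 2 (by omega) (by omega), SA, Finset.sum_mul, ← sub_eq_zero, ← neg_eq_zero,
    ← Finset.sum_sub_distrib, ← Finset.sum_neg_distrib,
    Finset.sum_eq_zero_iff_of_nonneg] at e2
  · have k := e2 s (Finset.mem_univ _)
    rw [if_pos ⟨ws, cs⟩, if_pos ⟨ws, cs⟩] at k
    rcases us s ws cs with l | l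
    · rw [nf3 s l] at k; norm_num at k
    · rw [cm, l]
  · intro v _
    split_ifs with hv
    · rcases us v hv.1 hv.2 with l | l
      · rw [nf3 v l]; norm_num
      · rw [nf4 v l]; norm_num
    · norm_num

lemma Ctx.level2 (h : Ctx G D p b α β) {x z c w : V} (hxz : G.dist x z = 2)
    (hxc : G.dist x c = 3) (hzc : G.dist z c = 1) (hzw : G.dist z w = 1) (hxw : G.dist x w = 2) :
    ∃ s, G.dist w s = 1 ∧ G.dist x s = 3 ∧ Bset G x s = Bset G x c := by
  have hD := h.hD
  have hcw : G.dist c w = 2 := h.two hzc hzw (by rintro rfl; omega)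
  by_cases hu : ∃ e, e ≠ z ∧ G.dist c e = 1 ∧ G.dist w e = 1
  · obtain ⟨e, ez, ce, we⟩ := hu
    have hxe := h.case1 hxz hxc hzc hzw hxw ce (by rw [cm, we]) ez
    exact ⟨e, we, hxe, (h.L3 ce hxc hxe).symm⟩
  have hp : p 2 1 1 = 1 := by
    rw [← h.hdr 2 1 1 (by omega) (by omega) (by omega) c w hcw, Set.ncard_eq_one]
    refine ⟨z, Set.Subset.antisymm ?_ ?_⟩
    · rintro e ⟨e1, e2⟩
      by_contra hne
      exact hu ⟨e, hne, e1, e2⟩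
    · rintro _ rfl
      exact ⟨by rw [cm, hzc], by rw [cm, hzw]⟩
  by_cases hT : ∀ t, G.dist c t = 1 → G.dist w t = 2 → G.dist x t = 2
  · exact h.exc hp hxz hxc hzc hzw hxw hcw hT
  · push Not at hT
    obtain ⟨t, ct, wt, hne⟩ := hT
    obtain ⟨xt, s, ws, ts, xs⟩ :=
      (h.claimT hp hxz hxc hzc hzw hxw hcw ct wt).resolve_left hne
    exact ⟨s, ws, xs, ((h.L3 ct hxc xt).trans (h.L3 ts xt xs)).symm⟩

lemma Ctx.down (h : Ctx G D p b α β) {x y z v : V} (hz : z ∈ Delta G x y)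
    (hv : G.dist x v + G.dist v z ≤ G.dist x z) : v ∈ Delta G x y := by
  obtain ⟨c, hc, e⟩ := hz
  refine ⟨c, hc, ?_⟩
  have := h.tri v z c
  have := h.tri x v c
  omega

lemma Ctx.side (h : Ctx G D p b α β) {x y z w : V} (hz : z ∈ Delta G x y)
    (hzw : G.dist z w = 1) (hw : G.dist x w = G.dist x z) : w ∈ Delta G x y := by
  obtain ⟨c, ⟨hxc, hc⟩, e⟩ := hz
  have : G.dist x z = 0 ∨ G.dist x z = 1 ∨ G.dist x z = 2 ∨ G.dist x z = 3 := by omega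
  rcases this with k | k | k | k
  · have e1 := (h.conn.dist_eq_zero_iff).1 k
    have e2 := (h.conn.dist_eq_zero_iff).1 (hw.trans k)
    rw [← e1, ← e2, SimpleGraph.dist_self] at hzw
    omega
  · exact (h.notri k (hw.trans k) hzw).elim
  · obtain ⟨s, ws, xs, hs⟩ := h.level2 k hxc (by omega) hzw (hw.trans k)
    exact ⟨s, ⟨xs, hs.trans hc⟩, by omega⟩
  · have e1 : z = c := (h.conn.dist_eq_zero_iff).1 (by omega)
    subst e1
    refine ⟨w, ⟨hw.trans k, (h.L3 hzw k (hw.trans k)).symm.trans hc⟩, ?_⟩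
    rw [SimpleGraph.dist_self, add_zero]

lemma Ctx.main (h : Ctx G D p b α β) {x y v : V} (n : ℕ) : ∀ z ∈ Delta G x y, G.dist z v = n →
    G.dist x v + G.dist v z ≤ G.dist x z + 1 → v ∈ Delta G x y := by
  induction n with
  | zero =>
    intro z hz hn _
    rwa [← (h.conn.dist_eq_zero_iff).1 hn]
  | succ n ih =>
    intro z hz hn hle
    obtain ⟨w, zw, wv⟩ := step h.conn hn
    have := cm G v z
    have := cm G v w
    have := cm G z w
    have := h.tri x v w
    have := h.tri x w z
    have : G.dist x w = G.dist x z ∨ G.dist x w + 1 = G.dist x z := by omega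
    rcases this with k | k
    · exact ih w (h.side hz zw k) wv (by omega)
    · exact ih w (h.down hz (by omega)) wv (by omega)
end lev
end CP
/-- Classical parameters `(D, b, α, β)`, `D ≥ 4`, `a₁ = 0`, `a₂ ≠ 0`,
`∂(x,y) = 3`, `Δ = [x, C]`. Then `Δ` is weak-geodetically closed with respect to `x`:
for all `z ∈ Δ` and all `v` with `∂(x,v) + ∂(v,z) ≤ ∂(x,z) + 1`, one has `v ∈ Δ`. -/
theorem Delta_wgc_wrt_x [Fintype V] (G : SimpleGraph V) (hconn : G.Connected)
    (D : ℕ) (hD : 4 ≤ D)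
    (hdiam_le : ∀ x y : V, G.dist x y ≤ D) (hdiam : ∃ x y : V, G.dist x y = D)
    (p : ℕ → ℕ → ℕ → ℕ) (hdr : G.IsDistRegularWith D p)
    (b α β : ℝ) (hcp : HasClassicalParams D p b α β)
    (ha1 : p 1 1 1 = 0) (ha2 : p 2 1 2 ≠ 0)
    (x y : V) (hxy : G.dist x y = 3) :
    ∀ z ∈ Delta G x y, ∀ v : V,
      G.dist x v + G.dist v z ≤ G.dist x z + 1 → v ∈ Delta G x y := by
  classical
  have h : CP.Ctx G D p b α β :=
    ⟨hconn, hD, hdiam_le, hdr, hcp, ha1, ha2, ⟨x, y, hxy⟩⟩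
  exact fun z hz v hv => h.main _ z hz rfl hv
end
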